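/- Fix n ≥ 1 and a real δ with 0 < δ < 1/(2n-1). There is a constant c = c(n) > 0 and a constant C = C(n, δ) such that the following holds. Let D be a positive integer with prime factorization D = p_1^{k_1} ⋯ p_m^{k_m} where each exponent satisfies k_i ≥ 2, and suppose Cprod = p_1 ⋯ p_m < H^{1+δ} for a real H ≥ 2. Then the number of tuples (a_1,...,a_n) ∈ ℤ^n with |a_i| ≤ H for all i, such that for each i = 1, ..., m the reduction modulo p_i of x^n + a_1 x^{n-1} + ... + a_n has index at least k_i over 𝔽_{p_i}, is at most C · c^m · H^n / D. -/

import Mathlib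

open scoped Classical
open Polynomial

/-- The index of a polynomial `P` over a field `K`: writing `P = ∏ P_i^{e_i}` with the
`P_i` distinct irreducible of degree `f_i`, the index is `Σ (e_i - 1) f_i`; when the
irreducible factors of `P` are separable (e.g. in characteristic `0` or characteristic
greater than `deg P`) this equals `deg P` minus the number of distinct roots of `P` in
an algebraic closure of `K`. -/
noncomputable def polyIndexOver (K : Type*) [Field K] (P : Polynomial K) : ℕ :=
  P.natDegree - ((P.map (algebraMap K (AlgebraicClosure K))).roots.toFinset.card)

/-- The index over `𝔽_p` of the reduction modulo a prime `p` of the monic integer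
polynomial `x^n + a_1 x^{n-1} + ... + a_n`. -/
noncomputable def indexModP (p : ℕ) (hp : p.Prime) (n : ℕ) (a : Fin n → ℤ) : ℕ :=
  haveI : Fact p.Prime := ⟨hp⟩
  polyIndexOver (ZMod p)
    (X ^ n + ∑ i : Fin n, C ((a i : ZMod p)) * X ^ (n - 1 - (i : ℕ)))

/-!
The index of a polynomial is invariant under the translations `P(X) ↦ P(X + t)`. Averaging over `t`
turns the Fourier coefficients of the set of monic polynomials of degree `n` and index at least `k`
over `𝔽_p` into means of complete exponential sums of polynomials of degree less than `n`. By Weil's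
bound these are at most `n √p`, so the nontrivial coefficients are smaller than the trivial one by a
factor of order `√p`. Weil's bound comes from Stepanov's method, which bounds the number of points
of the curves `y ^ p - y = f(x)`, applied over all extensions of `𝔽_p`: it controls the inverse
roots of the L-function of the exponential sum.

By the Chinese remainder theorem the Fourier coefficients modulo `N = ∏ pᵢ` are products. The
polynomials in the box are counted with a Fejér kernel of length about `N / H`; as
`N ^ (2 n - 1) ≤ H ^ (2 n)`, the decay of the coefficients makes up for the number of frequencies
involved, and the count is at most a constant multiple of `Hⁿ` times the product of the densities
modulo the `pᵢ`. A polynomial of index at least `k` has a radical of degree at most `n - k`, so the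
density modulo `p` is at most a constant multiple of `p ^ (-k)`.
-/

/-! ### Weighted degrees of bivariate polynomials -/

section Stepanov

open scoped Polynomial.Bivariate

section WeightedDegree

variable {R : Type*} [CommRing R]

/-- The substitution `x ↦ x T ^ a`, `y ↦ y T ^ b`, which records the weighted degree with weights
`a`, `b` of a bivariate polynomial as a degree in `T`. In `R[X][Y]` the inner variable is `x`
and the outer one `y`; in `R[X][Y][X]` the outermost variable is `T`. -/
noncomputable def weightScale (a b : ℕ) : R[X][Y] →+* R[X][Y][X] :=
  eval₂RingHom (R := R[X]) (S := R[X][Y][X])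
    (eval₂RingHom (R := R) (S := R[X][Y][X])
      ((C : R[X][Y] →+* R[X][Y][X]).comp ((C : R[X] →+* R[X][Y]).comp C)) (C (C X) * X ^ a))
    (C Y * X ^ b)

/-- The weighted degree of a bivariate polynomial, where `x` has weight `a` and `y` weight `b`. -/
noncomputable def weightedDegree (a b : ℕ) (P : R[X][Y]) : ℕ :=
  (weightScale a b P).natDegree

/-- The weighted homogeneous component of top weighted degree of a bivariate polynomial. -/
noncomputable def leadingForm (a b : ℕ) (P : R[X][Y]) : R[X][Y] :=
  (weightScale a b P).leadingCoeff

variable (a b : ℕ)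

lemma weightScale_monomial (i j : ℕ) (r : R) :
    weightScale a b (monomial j (monomial i r)) =
      monomial (a * i + b * j) (monomial j (monomial i r)) := by
  simp only [← C_mul_X_pow_eq_monomial, weightScale, coe_eval₂RingHom, eval₂_C,
    eval₂_X, RingHom.comp_apply, map_mul, map_pow]
  ring

lemma coeff_weightScale (P : R[X][Y]) (w i j : ℕ) :
    (((weightScale a b P).coeff w).coeff j).coeff i =
      if a * i + b * j = w then (P.coeff j).coeff i else 0 := by
  induction P using Polynomial.induction_on' with
  | add P Q hP hQ => simp only [map_add, coeff_add, hP, hQ]; split_ifs <;> simp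
  | monomial j' g =>
    induction g using Polynomial.induction_on' with
    | add P Q hP hQ => simp only [map_add, coeff_add, hP, hQ]; split_ifs <;> simp
    | monomial i' r =>
      rw [weightScale_monomial]
      by_cases hj : j' = j <;> by_cases hi : i' = i <;> by_cases hw : a * i' + b * j' = w <;>
        simp_all [coeff_monomial]

lemma weightScale_injective : Function.Injective (weightScale (R := R) a b) := by
  rw [injective_iff_map_eq_zero]
  intro P hP
  ext j i
  have hcoeff := coeff_weightScale a b P (a * i + b * j) i j
  rw [if_pos rfl, hP] at hcoeff
  simpa using hcoeff.symm

variable {a b}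

lemma leadingForm_ne_zero {P : R[X][Y]} (hP : P ≠ 0) : leadingForm a b P ≠ 0 :=
  leadingCoeff_ne_zero.2 ((map_ne_zero_iff _ (weightScale_injective a b)).2 hP)

lemma weightedDegree_le {P : R[X][Y]} {d : ℕ}
    (hP : ∀ i j, (P.coeff j).coeff i ≠ 0 → a * i + b * j ≤ d) : weightedDegree a b P ≤ d := by
  rw [weightedDegree, natDegree_le_iff_coeff_eq_zero]
  intro w hw
  ext j i
  rw [coeff_weightScale]
  split_ifs with h
  · by_contra hne
    have := hP i j hne
    lia
  · rfl

lemma le_weightedDegree {P : R[X][Y]} {i j : ℕ} (h : (P.coeff j).coeff i ≠ 0) :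
    a * i + b * j ≤ weightedDegree a b P := by
  refine le_natDegree_of_ne_zero fun hzero ↦ h ?_
  simpa [hzero] using (coeff_weightScale a b P (a * i + b * j) i j).symm

lemma natDegree_coeff_weightScale_le (P : R[X][Y]) (w : ℕ) :
    ((weightScale a b P).coeff w).natDegree ≤ P.natDegree := by
  rw [natDegree_le_iff_coeff_eq_zero]
  intro j hj
  ext i
  simp [coeff_weightScale, coeff_eq_zero_of_natDegree_lt hj]

section IsDomain

variable [IsDomain R]

lemma leadingForm_mul (P Q : R[X][Y]) :
    leadingForm a b (P * Q) = leadingForm a b P * leadingForm a b Q := by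
  simp [leadingForm]

lemma leadingForm_pow (P : R[X][Y]) (e : ℕ) :
    leadingForm a b (P ^ e) = leadingForm a b P ^ e := by
  simp [leadingForm]

lemma weightedDegree_mul {P Q : R[X][Y]} (hP : P ≠ 0) (hQ : Q ≠ 0) :
    weightedDegree a b (P * Q) = weightedDegree a b P + weightedDegree a b Q := by
  rw [weightedDegree, map_mul, natDegree_mul] <;>
    simp_all [weightedDegree, map_ne_zero_iff _ (weightScale_injective a b)]

lemma weightedDegree_pow (P : R[X][Y]) (e : ℕ) :
    weightedDegree a b (P ^ e) = e * weightedDegree a b P := by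
  simp [weightedDegree]

end IsDomain

end WeightedDegree

section ArtinSchreier

variable {R : Type*} [CommRing R]

/-- The Artin–Schreier polynomial `y ^ p - y - f(x)` in `R[x][y]`. -/
noncomputable def artinSchreier (p : ℕ) (f : R[X]) : R[X][Y] := Y ^ p - Y - C f

lemma artinSchreier_monic {p : ℕ} (hp : 2 ≤ p) (f : R[X]) : (artinSchreier p f).Monic := by
  nontriviality R
  rw [artinSchreier, sub_sub]
  refine monic_X_pow_sub ?_
  rw [degree_X_add_C]
  exact_mod_cast hp

variable [IsDomain R]

lemma natDegree_artinSchreier {p : ℕ} (hp : 2 ≤ p) (f : R[X]) :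
    (artinSchreier p f).natDegree = p := by
  rw [artinSchreier, sub_sub, natDegree_sub_eq_left_of_natDegree_lt, natDegree_X_pow]
  rwa [natDegree_X_add_C, natDegree_X_pow]

lemma natDegree_modByMonic_artinSchreier_lt {p : ℕ} (hp : 2 ≤ p) (f : R[X]) (P : R[X][Y]) :
    (P %ₘ artinSchreier p f).natDegree < p := by
  have hdeg := natDegree_artinSchreier hp f
  refine (natDegree_modByMonic_lt P (artinSchreier_monic hp f) ?_).trans_eq hdeg
  rintro h
  simp only [h, natDegree_one] at hdeg
  lia

lemma coeff_artinSchreier_self {p : ℕ} (hp : 2 ≤ p) (f : R[X]) :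
    (artinSchreier p f).coeff p = 1 := by
  simpa [Monic, leadingCoeff, natDegree_artinSchreier hp] using artinSchreier_monic hp f

lemma weightedDegree_artinSchreier {p : ℕ} (hp : 2 ≤ p) (f : R[X]) :
    weightedDegree p f.natDegree (artinSchreier p f) = f.natDegree * p := by
  refine le_antisymm (weightedDegree_le fun i j h ↦ ?_) ?_
  · have hj : j ≤ p := by
      by_contra! hlt
      rw [← natDegree_artinSchreier hp f] at hlt
      exact h (by rw [coeff_eq_zero_of_natDegree_lt hlt, coeff_zero])
    rcases eq_or_ne j 0 with rfl | hj0
    · have hi : i ≤ f.natDegree := by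
        refine le_natDegree_of_ne_zero fun hi ↦ h ?_
        simp [artinSchreier, coeff_X_pow, hi, (by lia : 0 ≠ p)]
      nlinarith
    · have hi : i = 0 := by
        by_contra hi
        refine h ?_
        simp only [artinSchreier, coeff_sub, coeff_X_pow, coeff_X, coeff_C, hj0, if_false]
        split_ifs <;> simp [coeff_one, hi]
      simpa [hi] using Nat.mul_le_mul_left _ hj
  · simpa using le_weightedDegree (a := p) (b := f.natDegree) (P := artinSchreier p f)
      (i := 0) (j := p) (by simp [coeff_artinSchreier_self hp])

lemma le_natDegree_leadingForm_artinSchreier {p : ℕ} (hp : 2 ≤ p) (f : R[X]) :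
    p ≤ (leadingForm p f.natDegree (artinSchreier p f)).natDegree := by
  refine le_natDegree_of_ne_zero fun h ↦ ?_
  have hcoeff := coeff_weightScale p f.natDegree (artinSchreier p f)
    (weightedDegree p f.natDegree (artinSchreier p f)) 0 p
  rw [weightedDegree, ← leadingCoeff, ← leadingForm, h, ← weightedDegree,
    weightedDegree_artinSchreier hp, coeff_artinSchreier_self hp] at hcoeff
  simp at hcoeff

lemma le_natDegree_leadingForm_of_dvd {p : ℕ} (hp : 2 ≤ p) {f : R[X]} {P : R[X][Y]} (hP : P ≠ 0)
    (hdvd : artinSchreier p f ∣ P) : p ≤ (leadingForm p f.natDegree P).natDegree := by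
  obtain ⟨Q, rfl⟩ := hdvd
  rw [leadingForm_mul, natDegree_mul (leadingForm_ne_zero (left_ne_zero_of_mul hP))
    (leadingForm_ne_zero (right_ne_zero_of_mul hP))]
  exact (le_natDegree_leadingForm_artinSchreier hp f).trans (Nat.le_add_right _ _)

-- If the remainder had larger weight than `P`, its leading form, of `y`-degree less than `p`,
-- would be the leading form of a multiple of the Artin–Schreier polynomial.
lemma weightedDegree_modByMonic_artinSchreier_le {p : ℕ} (hp : 2 ≤ p) (f : R[X]) (P : R[X][Y]) :
    weightedDegree p f.natDegree (P %ₘ artinSchreier p f) ≤ weightedDegree p f.natDegree P := by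
  by_contra! hlt
  set r := P %ₘ artinSchreier p f
  have hform : leadingForm p f.natDegree (P - r) = -leadingForm p f.natDegree r := by
    rw [leadingForm, map_sub]
    exact leadingCoeff_sub_of_degree_lt' (degree_lt_degree hlt)
  have hdvd : artinSchreier p f ∣ P - r :=
    ⟨P /ₘ artinSchreier p f, sub_eq_of_eq_add' (modByMonic_add_div P _).symm⟩
  have hne : P - r ≠ 0 := fun h ↦ hlt.ne' (by rw [sub_eq_zero.1 h])
  have hle := le_natDegree_leadingForm_of_dvd hp hne hdvd
  rw [hform, natDegree_neg] at hle
  exact absurd (natDegree_modByMonic_artinSchreier_lt hp f P)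
    (not_lt.2 (hle.trans (natDegree_coeff_weightScale_le _ _)))

end ArtinSchreier

section LinearCombinations

variable {R ι : Type*} [CommRing R] [Fintype ι] {a b : ℕ}

lemma weightScale_smul (r : R) (P : R[X][Y]) :
    weightScale a b (r • P) = r • weightScale a b P := by
  ext w j i
  simp [coeff_weightScale]

lemma weightScale_sum_smul (E : ι → R[X][Y]) (c : ι → R) :
    weightScale a b (∑ k, c k • E k) = ∑ k, c k • weightScale a b (E k) := by
  simp only [map_sum, weightScale_smul]

lemma weightedDegree_sum_smul_le {E : ι → R[X][Y]} {d : ℕ} (hE : ∀ k, weightedDegree a b (E k) ≤ d)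
    (c : ι → R) : weightedDegree a b (∑ k, c k • E k) ≤ d := by
  rw [weightedDegree, weightScale_sum_smul]
  exact natDegree_sum_le_of_forall_le _ _ fun k _ ↦ (natDegree_smul_le _ _).trans (hE k)

lemma exists_leadingForm_sum_smul_eq [IsDomain R] {E : ι → R[X][Y]} (hE : ∀ k, E k ≠ 0)
    (hinj : Function.Injective fun k ↦ weightedDegree a b (E k)) {c : ι → R} (hc : c ≠ 0) :
    ∃ k, c k ≠ 0 ∧ leadingForm a b (∑ k, c k • E k) = c k • leadingForm a b (E k) := by
  obtain ⟨k₀, hk₀⟩ := Function.ne_iff.1 hc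
  obtain ⟨k, hk, hmax⟩ := Finset.exists_max_image {k | c k ≠ 0}
    (fun k ↦ weightedDegree a b (E k)) ⟨k₀, by simpa using hk₀⟩
  simp only [Finset.mem_filter, Finset.mem_univ, true_and] at hk hmax
  have hcoeff : (weightScale a b (∑ k, c k • E k)).coeff (weightedDegree a b (E k)) =
      c k • leadingForm a b (E k) := by
    rw [weightScale_sum_smul, finsetSum_coeff, Finset.sum_eq_single k _ (by simp)]
    · rw [coeff_smul, leadingForm, leadingCoeff, weightedDegree]
    · intro l _ hlk
      by_cases hl : c l = 0
      · simp [hl]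
      · rw [coeff_smul, coeff_eq_zero_of_natDegree_lt, smul_zero]
        exact (hmax l hl).lt_of_ne fun h ↦ hlk (hinj h)
  have hdeg : (weightScale a b (∑ k, c k • E k)).natDegree = weightedDegree a b (E k) := by
    refine natDegree_eq_of_le_of_coeff_ne_zero ?_ ?_
    · rw [weightScale_sum_smul]
      refine natDegree_sum_le_of_forall_le _ _ fun l _ ↦ ?_
      by_cases hl : c l = 0
      · simp [hl]
      · exact (natDegree_smul_le _ _).trans (hmax l hl)
    · rw [hcoeff]
      exact smul_ne_zero hk (leadingForm_ne_zero (hE k))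
  exact ⟨k, hk, by rw [← hcoeff, leadingForm, leadingCoeff, hdeg]⟩

lemma not_artinSchreier_dvd_sum_smul [IsDomain R] {p : ℕ} (hp : 2 ≤ p) {f : R[X]} {E : ι → R[X][Y]}
    (hE : ∀ k, E k ≠ 0)
    (hinj : Function.Injective fun k ↦ weightedDegree p f.natDegree (E k))
    (hform : ∀ k, (leadingForm p f.natDegree (E k)).natDegree < p) {c : ι → R} (hc : c ≠ 0) :
    ¬ artinSchreier p f ∣ ∑ k, c k • E k := by
  intro hdvd
  obtain ⟨k, hk, hlead⟩ := exists_leadingForm_sum_smul_eq hE hinj hc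
  have hne : ∑ k, c k • E k ≠ 0 := by
    intro h
    refine smul_ne_zero hk (leadingForm_ne_zero (hE k)) (hlead.symm.trans ?_)
    simp [h, leadingForm]
  have hle := le_natDegree_leadingForm_of_dvd hp hne hdvd
  rw [hlead] at hle
  exact absurd (hle.trans (natDegree_smul_le _ _)) (not_le.2 (hform k))

end LinearCombinations

/-- The weight `a i + b j` of the lattice point `(i, j)`, i.e. of the monomial `x ^ i y ^ j`. -/
def latticeWeight (a b : ℕ) (z : ℕ × ℕ) : ℕ := a * z.1 + b * z.2

lemma latticeWeight_injOn {a b : ℕ} (hab : a.Coprime b) :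
    Set.InjOn (latticeWeight a b) {z | z.2 < a} := by
  rintro ⟨i, j⟩ hj ⟨i', j'⟩ hj' h
  simp only [Set.mem_ofPred_eq, latticeWeight] at hj hj' h
  have hmod : b * j ≡ b * j' [MOD a] := by
    simpa [Nat.ModEq, Nat.mul_add_mod] using congrArg (· % a) h
  obtain rfl : j = j' := (Nat.ModEq.cancel_left_of_coprime hab hmod).eq_of_lt_of_lt hj hj'
  obtain rfl : i = i' := Nat.eq_of_mul_eq_mul_left (Nat.zero_lt_of_lt hj) (Nat.add_right_cancel h)
  rfl

lemma card_le_of_latticeWeight_le {a b d : ℕ} (hab : a.Coprime b) {s : Finset (ℕ × ℕ)}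
    (hs : ∀ z ∈ s, z.2 < a ∧ latticeWeight a b z ≤ d) : s.card ≤ d + 1 := by
  rw [← Finset.card_range (d + 1)]
  refine Finset.card_le_card_of_injOn (latticeWeight a b) (fun z hz ↦ ?_)
    ((latticeWeight_injOn hab).mono fun z hz ↦ (hs z hz).1)
  simpa [Nat.lt_succ_iff] using (hs z hz).2

variable {K : Type*} [Field K]

-- The remainders modulo the Artin–Schreier polynomial of polynomials of weighted degree at most
-- `d` span a space of dimension at most `d + 1`.
lemma exists_artinSchreier_dvd_sum_smul {p d : ℕ} (hp : 2 ≤ p) {f : K[X]}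
    (hpf : p.Coprime f.natDegree) {ι : Type*} [Fintype ι] {E : ι → K[X][Y]}
    (hE : ∀ k, weightedDegree p f.natDegree (E k) ≤ d) (hd : d + 1 < Fintype.card ι) :
    ∃ c : ι → K, c ≠ 0 ∧ artinSchreier p f ∣ ∑ k, c k • E k := by
  set Z : Finset (ℕ × ℕ) := {z ∈ Finset.range (d + 1) ×ˢ Finset.range p |
    latticeWeight p f.natDegree z ≤ d}
  let remainder : (ι → K) →ₗ[K] K[X][Y] :=
    ((artinSchreier p f).modByMonicHom.restrictScalars K).comp (Fintype.linearCombination K E)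
  let coeffs : K[X][Y] →ₗ[K] Z → K :=
    LinearMap.pi fun z ↦ (lcoeff K z.1.1).comp ((lcoeff K[X] z.1.2).restrictScalars K)
  have hcard : Module.finrank K (Z → K) < Module.finrank K (ι → K) := by
    rw [Module.finrank_fintype_fun_eq_card, Module.finrank_fintype_fun_eq_card, Fintype.card_coe]
    refine (card_le_of_latticeWeight_le hpf fun z hz ↦ ?_).trans_lt hd
    simp only [Z, Finset.mem_filter, Finset.mem_product, Finset.mem_range] at hz
    exact ⟨hz.1.2, hz.2⟩
  obtain ⟨c, hc, hc0⟩ := Submodule.exists_mem_ne_zero_of_ne_bot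
    (LinearMap.ker_ne_bot_of_finrank_lt (f := coeffs ∘ₗ remainder) hcard)
  refine ⟨c, hc0, (modByMonic_eq_zero_iff_dvd (artinSchreier_monic hp f)).1 ?_⟩
  set r := (∑ k, c k • E k) %ₘ artinSchreier p f
  have hvanish : ∀ z ∈ Z, (r.coeff z.2).coeff z.1 = 0 := fun z hz ↦ by
    simpa [coeffs, remainder, Fintype.linearCombination_apply, modByMonicHom] using
      congrFun (LinearMap.mem_ker.1 hc) ⟨z, hz⟩
  have hweight : weightedDegree p f.natDegree r ≤ d :=
    (weightedDegree_modByMonic_artinSchreier_le hp f _).trans (weightedDegree_sum_smul_le hE c)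
  ext j i
  by_contra hne
  have hj : j < p := by
    by_contra! hle
    refine hne ?_
    rw [coeff_eq_zero_of_natDegree_lt
      ((natDegree_modByMonic_artinSchreier_lt hp f _).trans_le hle), coeff_zero, coeff_zero,
      coeff_zero]
  have hij : p * i + f.natDegree * j ≤ d := (le_weightedDegree hne).trans hweight
  have hi : i < d + 1 := by nlinarith
  refine hne ((hvanish (i, j) ?_).trans (by simp))
  exact Finset.mem_filter.2
    ⟨Finset.mem_product.2 ⟨Finset.mem_range.2 hi, Finset.mem_range.2 hj⟩, hij⟩

section FinitePoints

lemma evalEval_artinSchreier (p : ℕ) (f : K[X]) (x y : K) :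
    (artinSchreier p f).evalEval x y = y ^ p - y - f.eval x := by
  simp [artinSchreier, evalEval_C]

lemma card_filter_artinSchreier_fiber_le [Fintype K] {p : ℕ} (hp : 2 ≤ p) (f : K[X])
    (x : K) :
    ({z : K × K | z.2 ^ p - z.2 = f.eval z.1 ∧ z.1 = x} : Finset (K × K)).card ≤ p := by
  have hdeg : (X ^ p - X - C (f.eval x)).natDegree = p := by
    rw [natDegree_sub_C, FiniteField.X_pow_card_sub_X_natDegree_eq K hp]
  rw [← Finset.card_image_of_injOn (f := Prod.snd) (fun z hz w hw h ↦
    Prod.ext ((Finset.mem_filter.1 hz).2.2.trans (Finset.mem_filter.1 hw).2.2.symm) h)]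
  refine (card_le_degree_of_subset_roots fun y hy ↦ ?_).trans_eq hdeg
  obtain ⟨z, hz, rfl⟩ := Finset.mem_image.1 (Finset.mem_def.2 hy)
  obtain ⟨-, hcurve, rfl⟩ := Finset.mem_filter.1 hz
  rw [mem_roots (ne_zero_of_natDegree_gt (n := 0) (by lia)), IsRoot.def]
  simp [hcurve]

variable {p : ℕ} [Fact p.Prime] [CharP K p]

-- The points of the curve over `x` are permuted by the translations `y ↦ y + a`, `a ∈ 𝔽_p`.
lemma map_evalRingHom_eq_zero_of_evalEval_eq_zero {f : K[X]} {P : K[X][Y]}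
    (hdeg : P.natDegree < p) (hP : ∀ x y, y ^ p - y = f.eval x → P.evalEval x y = 0) {x y : K}
    (hxy : y ^ p - y = f.eval x) : P.map (evalRingHom x) = 0 := by
  refine eq_zero_of_natDegree_lt_card_of_eval_eq_zero _
    (f := fun a : ZMod p ↦ y + ZMod.castHom dvd_rfl K a)
    ((add_right_injective y).comp (ZMod.castHom dvd_rfl K).injective) (fun a ↦ ?_)
    (natDegree_map_le.trans_lt (by rwa [ZMod.card]))
  rw [map_evalRingHom_eval]
  refine hP x _ ?_
  rw [add_pow_char, ← map_pow, ZMod.pow_card, ← hxy]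
  ring

lemma card_artinSchreier_points_le_weightedDegree [Fintype K] {f : K[X]} {P : K[X][Y]}
    (hdvd : ¬ artinSchreier p f ∣ P) (hP : ∀ x y, y ^ p - y = f.eval x → P.evalEval x y = 0) :
    ({z : K × K | z.2 ^ p - z.2 = f.eval z.1} : Finset (K × K)).card ≤
      weightedDegree p f.natDegree P := by
  have hp := (Fact.out : p.Prime).two_le
  set r := P %ₘ artinSchreier p f
  have hr0 : r ≠ 0 := mt (modByMonic_eq_zero_iff_dvd (artinSchreier_monic hp f)).1 hdvd
  have hr : ∀ x y, y ^ p - y = f.eval x → r.evalEval x y = 0 := fun x y hxy ↦ by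
    rw [← hP x y hxy, ← modByMonic_add_div P (artinSchreier p f), evalEval_add, evalEval_mul,
      evalEval_artinSchreier, hxy, sub_self, zero_mul, add_zero]
  obtain ⟨j, hj⟩ : ∃ j, r.coeff j ≠ 0 := by
    by_contra! h
    exact hr0 (by ext1 j; simp [h j])
  have hroot : ∀ x y, y ^ p - y = f.eval x → x ∈ (r.coeff j).roots := fun x y hxy ↦ by
    have hzero := map_evalRingHom_eq_zero_of_evalEval_eq_zero
      (natDegree_modByMonic_artinSchreier_lt hp f P) hr hxy
    rw [mem_roots hj]
    simpa using congrArg (coeff · j) hzero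
  calc ({z : K × K | z.2 ^ p - z.2 = f.eval z.1} : Finset (K × K)).card
      ≤ p * (r.coeff j).roots.toFinset.card := by
        refine Finset.card_le_mul_card_image_of_maps_to (f := Prod.fst) (fun z hz ↦ ?_) p
          fun x _ ↦ ?_
        · exact Multiset.mem_toFinset.2 (hroot z.1 z.2 (by simpa using hz))
        · rw [Finset.filter_filter]
          exact card_filter_artinSchreier_fiber_le hp f x
    _ ≤ p * (r.coeff j).natDegree := by
        gcongr
        exact (Multiset.toFinset_card_le _).trans (card_roots' _)
    _ ≤ weightedDegree p f.natDegree r :=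
        le_of_add_le_left (le_weightedDegree (leadingCoeff_ne_zero.2 hj))
    _ ≤ weightedDegree p f.natDegree P := weightedDegree_modByMonic_artinSchreier_le hp f P

end FinitePoints

section StepanovMonomial

/-- The `Q`-adic monomial `x ^ i y ^ j (x ^ i') ^ Q (y + A) ^ j'` of Stepanov's method, where
`lo = (i, j)` and `hi = (i', j')`; on the curve `y + A` takes the value `y ^ Q`. -/
noncomputable def stepanovMonomial (A : K[X]) (Q : ℕ) (lo hi : ℕ × ℕ) : K[X][Y] :=
  C X ^ (lo.1 + hi.1 * Q) * Y ^ lo.2 * (Y + C A) ^ hi.2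

lemma weightedDegree_X_add_C {a b : ℕ} {A : K[X]} (hb : b < a * A.natDegree) :
    weightedDegree a b (Y + C A) = a * A.natDegree ∧
      (leadingForm a b (Y + C A)).natDegree = 0 := by
  have hcoeff : ∀ i j, ((Y + C A : K[X][Y]).coeff j).coeff i ≠ 0 →
      j = 0 ∧ i ≤ A.natDegree ∨ j = 1 ∧ i = 0 := by
    rintro i (_ | _ | j) h
    · exact .inl ⟨rfl, le_natDegree_of_ne_zero (by simpa using h)⟩
    · exact .inr ⟨rfl, by by_contra hi; simp [coeff_one, hi] at h⟩
    · simp [coeff_X] at h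
  have hA : A ≠ 0 := by
    rintro rfl
    simp at hb
  have hdeg : weightedDegree a b (Y + C A) = a * A.natDegree := by
    refine le_antisymm (weightedDegree_le fun i j h ↦ ?_) ?_
    · rcases hcoeff i j h with ⟨rfl, hi⟩ | ⟨rfl, rfl⟩
      · simpa using Nat.mul_le_mul_left a hi
      · lia
    · simpa using le_weightedDegree (a := a) (b := b) (P := Y + C A) (i := A.natDegree) (j := 0)
        (by simpa using hA)
  refine ⟨hdeg, Nat.le_zero.1 (natDegree_le_iff_coeff_eq_zero.2 fun j hj ↦ ?_)⟩
  ext i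
  rw [leadingForm, leadingCoeff, ← weightedDegree, hdeg, coeff_weightScale]
  split_ifs with h
  · by_contra hne
    rcases hcoeff i j hne with ⟨rfl, -⟩ | ⟨rfl, rfl⟩ <;> lia
  · rfl

lemma stepanovMonomial_ne_zero (A : K[X]) (Q : ℕ) (lo hi : ℕ × ℕ) :
    stepanovMonomial A Q lo hi ≠ 0 :=
  mul_ne_zero (mul_ne_zero (pow_ne_zero _ (C_ne_zero.2 X_ne_zero)) (pow_ne_zero _ X_ne_zero))
    (pow_ne_zero _ (X_add_C_ne_zero A))

lemma weightScale_C_X (a b : ℕ) : weightScale (R := K) a b (C X) = C (C X) * X ^ a := by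
  simp [weightScale]

lemma weightScale_X (a b : ℕ) : weightScale (R := K) a b Y = C Y * X ^ b := by
  simp [weightScale]

variable {p n Q : ℕ} {A : K[X]}

lemma weightedDegree_stepanovMonomial (hn : n < n * Q) (hA : p * A.natDegree = n * Q)
    (lo hi : ℕ × ℕ) :
    weightedDegree p n (stepanovMonomial A Q lo hi) =
      latticeWeight p n lo + Q * latticeWeight p n hi := by
  rw [stepanovMonomial, weightedDegree_mul, weightedDegree_mul, weightedDegree_pow,
    weightedDegree_pow, weightedDegree_pow, (weightedDegree_X_add_C (hA ▸ hn)).1, hA]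
  · simp only [weightedDegree, weightScale_C_X, weightScale_X]
    rw [natDegree_C_mul_X_pow _ _ (by simp), natDegree_C_mul_X_pow _ _ (by simp)]
    simp only [latticeWeight]
    ring
  all_goals simp [X_add_C_ne_zero]

lemma natDegree_leadingForm_stepanovMonomial (hn : n < n * Q) (hA : p * A.natDegree = n * Q)
    (lo hi : ℕ × ℕ) :
    (leadingForm p n (stepanovMonomial A Q lo hi)).natDegree = lo.2 := by
  have hX : leadingForm (R := K) p n (C X) = C X := by
    rw [leadingForm, weightScale_C_X, leadingCoeff_C_mul_X_pow]
  have hY : leadingForm (R := K) p n Y = Y := by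
    rw [leadingForm, weightScale_X, leadingCoeff_C_mul_X_pow]
  rw [stepanovMonomial, leadingForm_mul, leadingForm_mul, leadingForm_pow, leadingForm_pow,
    leadingForm_pow, hX, hY, natDegree_mul, natDegree_mul, natDegree_pow, natDegree_pow,
    natDegree_pow, (weightedDegree_X_add_C (hA ▸ hn)).2]
  · simp
  all_goals simp [leadingForm_ne_zero, X_add_C_ne_zero]

lemma evalEval_stepanovMonomial_pow [Fintype K] (hK : Fintype.card K = Q ^ 2) {x y : K}
    (hy : y ^ Q = y + A.eval x) (lo hi : ℕ × ℕ) :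
    (stepanovMonomial A Q lo hi).evalEval x y ^ Q =
      (stepanovMonomial A Q hi lo).evalEval x y := by
  have hfrob : ∀ z : K, (z ^ Q) ^ Q = z := fun z ↦ by
    rw [← pow_mul, ← sq, ← hK, FiniteField.pow_card]
  simp only [stepanovMonomial, evalEval_mul, evalEval_pow, evalEval_C, evalEval_add, evalEval_X,
    eval_X, ← hy]
  calc (x ^ (lo.1 + hi.1 * Q) * y ^ lo.2 * (y ^ Q) ^ hi.2) ^ Q
      = (x ^ Q) ^ lo.1 * ((x ^ Q) ^ Q) ^ hi.1 * (y ^ Q) ^ lo.2 * ((y ^ Q) ^ Q) ^ hi.2 := by ring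
    _ = x ^ (hi.1 + lo.1 * Q) * y ^ hi.2 * (y ^ Q) ^ lo.2 := by rw [hfrob, hfrob]; ring

end StepanovMonomial

lemma latticeWeight_fin_add_le {a b U : ℕ} (z : Fin U × Fin a) :
    latticeWeight a b (z.1, z.2) + a + b ≤ a * (U + b) := by
  have h₁ : a * (z.1 + 1) ≤ a * U := Nat.mul_le_mul_left a z.1.2
  have h₂ : b * (z.2 + 1) ≤ b * a := Nat.mul_le_mul_left b z.2.2
  simp only [latticeWeight]
  linarith

lemma latticeWeight_add_mul_injective {a b Q U V : ℕ} (hab : a.Coprime b)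
    (hQ : ∀ z : Fin U × Fin a, latticeWeight a b (z.1, z.2) < Q) :
    Function.Injective fun k : (Fin U × Fin a) × (Fin V × Fin a) ↦
      latticeWeight a b (k.1.1, k.1.2) + Q * latticeWeight a b (k.2.1, k.2.2) := by
  have hinj {W : ℕ} {z w : Fin W × Fin a}
      (h : latticeWeight a b (z.1, z.2) = latticeWeight a b (w.1, w.2)) : z = w := by
    have := latticeWeight_injOn hab z.2.2 w.2.2 h
    simp only [Prod.mk.injEq] at this
    exact Prod.ext (Fin.ext this.1) (Fin.ext this.2)
  rintro ⟨z, w⟩ ⟨z', w'⟩ h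
  have hlo := congrArg (· % Q) h
  simp only [Nat.add_mul_mod_self_left, Nat.mod_eq_of_lt (hQ _)] at hlo
  have hhi := congrArg (· / Q) h
  simp only [Nat.add_mul_div_left _ _ (Nat.zero_lt_of_lt (hQ z)), Nat.div_eq_of_lt (hQ _),
    Nat.zero_add] at hhi
  rw [hinj hlo, hinj hhi]

lemma stepanov_dimension_lt {p n U : ℕ} (hp : 2 ≤ p) (hU : 4 * (n + 1) ^ 2 * p ≤ U + n) :
    p * (U + n) * (p * (U + n) - p) + p * (U + n) + 2 * p * n + 1 <
      U * p * ((U + n + n + 1) * p) := by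
  have hle : p ≤ p * (U + n) := Nat.le_mul_of_pos_right p (by nlinarith)
  zify [hle] at *
  generalize hq : (U + n : ℤ) = q at *
  have hbig : 8 * ((n : ℤ) + 1) ^ 2 ≤ q := by nlinarith [sq_nonneg ((n : ℤ) + 1)]
  have hfirst : 2 * q < p * (2 * q - n * (n + 1)) := by nlinarith
  have hsecond : 2 * (p : ℤ) * n + 1 ≤ p * q := by nlinarith
  calc p * q * (p * q - p) + p * q + 2 * p * n + 1
      ≤ p * q * (p * q - p) + p * (2 * q) := by linarith
    _ < p * q * (p * q - p) + p * (p * (2 * q - n * (n + 1))) := by gcongr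
    _ = U * p * ((q + n + 1) * p) := by rw [← hq]; ring

/-- The polynomial `∑_{j < s} f ^ (p ^ j)`, by which the `s`-fold Frobenius translates the
`y`-coordinate of the curve `y ^ p - y = f(x)`. -/
noncomputable def frobeniusTranslation (p s : ℕ) (f : K[X]) : K[X] :=
  ∑ j ∈ Finset.range s, f ^ p ^ j

lemma natDegree_frobeniusTranslation_succ {p : ℕ} (hp : 2 ≤ p) {f : K[X]} (hf : f.natDegree ≠ 0)
    (s : ℕ) :
    (frobeniusTranslation p (s + 1) f).natDegree = f.natDegree * p ^ s := by
  induction s with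
  | zero => simp [frobeniusTranslation]
  | succ s ih =>
    have hlt : f.natDegree * p ^ s < f.natDegree * p ^ (s + 1) := by gcongr; lia
    rw [frobeniusTranslation, Finset.sum_range_succ, ← frobeniusTranslation,
      natDegree_add_eq_right_of_natDegree_lt, natDegree_pow, mul_comm]
    rwa [ih, natDegree_pow, mul_comm (p ^ (s + 1))]

lemma pow_eq_add_eval_frobeniusTranslation {p : ℕ} [Fact p.Prime] [CharP K p] {f : K[X]} {x y : K}
    (hxy : y ^ p - y = f.eval x) (s : ℕ) :
    y ^ p ^ s = y + (frobeniusTranslation p s f).eval x := by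
  induction s with
  | zero => simp [frobeniusTranslation]
  | succ s ih =>
    rw [frobeniusTranslation, Finset.sum_range_succ, ← frobeniusTranslation, eval_add, eval_pow,
      ← add_assoc, ← ih, pow_succ', pow_mul, ← hxy, sub_pow_char_pow, ← pow_mul]
    ring

variable {p s : ℕ} [Fact p.Prime] [CharP K p] [Fintype K]

lemma evalEval_sum_smul_stepanovMonomial_pow {ι : Type*} [Fintype ι] {Q : ℕ} (hQ : Q = p ^ s)
    (hK : Fintype.card K = Q ^ 2) {A : K[X]} {x y : K} (hy : y ^ Q = y + A.eval x)
    (lo hi : ι → ℕ × ℕ) (c : ι → K) :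
    (∑ k, c k ^ Q • stepanovMonomial A Q (lo k) (hi k)).evalEval x y ^ Q =
      (∑ k, c k • stepanovMonomial A Q (hi k) (lo k)).evalEval x y := by
  have hfrob (r : K) : (r ^ Q) ^ Q = r := by rw [← pow_mul, ← sq, ← hK, FiniteField.pow_card]
  simp only [evalEval_finsetSum, evalEval_smul, smul_eq_mul]
  rw [congrArg (_ ^ ·) hQ, sum_pow_char_pow, ← hQ]
  simp only [mul_pow, hfrob, evalEval_stepanovMonomial_pow hK hy]

-- Stepanov's method: the family is so large that some combination with coefficients `c` of the
-- swapped monomials vanishes on the curve; since `|K| = Q ^ 2`, it is the `Q`-th power of the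
-- combination of the monomials themselves with coefficients `c ^ Q`, which is nonzero.
lemma card_artinSchreier_points_le_of_stepanovMonomial {ι : Type*} [Fintype ι] {Q d D : ℕ}
    {f A : K[X]} (hQ : Q = p ^ s) (hK : Fintype.card K = Q ^ 2) (hpf : p.Coprime f.natDegree)
    (hfQ : f.natDegree < f.natDegree * Q) (hA : p * A.natDegree = f.natDegree * Q)
    (hyA : ∀ x y : K, y ^ p - y = f.eval x → y ^ Q = y + A.eval x) {lo hi : ι → ℕ × ℕ}
    (hinj : Function.Injective fun k ↦
      latticeWeight p f.natDegree (lo k) + Q * latticeWeight p f.natDegree (hi k))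
    (hlo : ∀ k, (lo k).2 < p) (hcard : d + 1 < Fintype.card ι)
    (hd : ∀ k, latticeWeight p f.natDegree (hi k) + Q * latticeWeight p f.natDegree (lo k) ≤ d)
    (hD : ∀ k, latticeWeight p f.natDegree (lo k) + Q * latticeWeight p f.natDegree (hi k) ≤ D) :
    ({z : K × K | z.2 ^ p - z.2 = f.eval z.1} : Finset (K × K)).card ≤ D := by
  have hp := (Fact.out : p.Prime).two_le
  obtain ⟨c, hc, S, hS⟩ := exists_artinSchreier_dvd_sum_smul hp hpf
    (E := fun k ↦ stepanovMonomial A Q (hi k) (lo k))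
    (fun k ↦ (weightedDegree_stepanovMonomial hfQ hA _ _).trans_le (hd k)) hcard
  have hcQ : (fun k ↦ c k ^ Q) ≠ 0 := fun h ↦
    hc (funext fun k ↦ eq_zero_of_pow_eq_zero (congrFun h k))
  have hndvd : ¬ artinSchreier p f ∣ ∑ k, c k ^ Q • stepanovMonomial A Q (lo k) (hi k) := by
    refine not_artinSchreier_dvd_sum_smul hp (fun k ↦ stepanovMonomial_ne_zero _ _ _ _) ?_
      (fun k ↦ ?_) hcQ
    · simpa only [weightedDegree_stepanovMonomial hfQ hA] using hinj
    · exact (natDegree_leadingForm_stepanovMonomial hfQ hA _ _).trans_lt (hlo k)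
  refine (card_artinSchreier_points_le_weightedDegree hndvd fun x y hxy ↦ ?_).trans
    (weightedDegree_sum_smul_le (fun k ↦
      (weightedDegree_stepanovMonomial hfQ hA _ _).trans_le (hD k)) _)
  refine eq_zero_of_pow_eq_zero (n := Q) ?_
  rw [evalEval_sum_smul_stepanovMonomial_pow hQ hK (hyA x y hxy), hS, evalEval_mul,
    evalEval_artinSchreier, hxy, sub_self, zero_mul]

lemma card_artinSchreier_points_le_of_add_frobenius {q : ℕ} {f A : K[X]}
    (hK : Fintype.card K = (p * q) ^ 2) (hpow : p * q = p ^ s) (hf : f.natDegree ≠ 0)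
    (hpf : p.Coprime f.natDegree) (hq : 4 * (f.natDegree + 1) ^ 2 * p ≤ q)
    (hA : A.natDegree = f.natDegree * q)
    (hyA : ∀ x y : K, y ^ p - y = f.eval x → y ^ (p * q) = y + A.eval x) :
    ({z : K × K | z.2 ^ p - z.2 = f.eval z.1} : Finset (K × K)).card ≤
      (p * q) ^ 2 + (2 * p * f.natDegree + 1) * (p * q) := by
  have hp := (Fact.out : p.Prime).two_le
  set n := f.natDegree
  obtain ⟨U, rfl⟩ : ∃ U, q = U + n := ⟨q - n, (Nat.sub_add_cancel (by nlinarith)).symm⟩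
  set q := U + n
  set Q := p * q
  have hlo (z : Fin U × Fin p) : latticeWeight p n (z.1, z.2) + p ≤ Q := by
    have := latticeWeight_fin_add_le (b := n) z
    lia
  have hhi (z : Fin (q + n + 1) × Fin p) : latticeWeight p n (z.1, z.2) ≤ Q + 2 * p * n := by
    have := latticeWeight_fin_add_le (b := n) z
    lia
  have hnQ : n < n * Q :=
    lt_mul_of_one_lt_right (by lia) (hp.trans (Nat.le_mul_of_pos_right p (by nlinarith)))
  refine card_artinSchreier_points_le_of_stepanovMonomial (d := Q * (Q - p) + Q + 2 * p * n)
    (ι := (Fin U × Fin p) × (Fin (q + n + 1) × Fin p)) (lo := fun k ↦ (k.1.1, k.1.2))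
    (hi := fun k ↦ (k.2.1, k.2.2)) hpow hK hpf hnQ (by rw [hA]; ring) hyA
    (latticeWeight_add_mul_injective hpf fun z ↦ by have := hlo z; lia) (fun k ↦ k.1.2.2)
    (by simpa using stepanov_dimension_lt hp hq) (fun k ↦ ?_) fun k ↦ ?_
  · have := Nat.mul_le_mul_left Q (Nat.le_sub_of_add_le (hlo k.1))
    have := hhi k.2
    lia
  · have := Nat.mul_le_mul_left Q (hhi k.2)
    have := hlo k.1
    nlinarith

theorem card_artinSchreier_points_le (hK : Fintype.card K = p ^ (2 * (s + 1))) {f : K[X]}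
    (hpf : p.Coprime f.natDegree) (hs : 4 * (f.natDegree + 1) ^ 2 * p ≤ p ^ s) :
    ({z : K × K | z.2 ^ p - z.2 = f.eval z.1} : Finset (K × K)).card ≤
      (p ^ (s + 1)) ^ 2 + (2 * p * f.natDegree + 1) * p ^ (s + 1) := by
  have hp := (Fact.out : p.Prime)
  have hf : f.natDegree ≠ 0 := fun h ↦ hp.ne_one (Nat.coprime_zero_right p |>.1 (h ▸ hpf))
  rw [pow_succ' p s]
  refine card_artinSchreier_points_le_of_add_frobenius (A := frobeniusTranslation p (s + 1) f)
    (by rw [hK]; ring) (pow_succ' p s).symm hf hpf hs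
    (natDegree_frobeniusTranslation_succ hp.two_le hf s) fun x y hxy ↦ ?_
  rw [← pow_succ']
  exact pow_eq_add_eval_frobeniusTranslation hxy _

end Stepanov

/-! ### Exponential sums over an extension with a square number of elements -/

section CharacterSums

lemma norm_sum_addChar_le_of_card_fiber_le {α G : Type*} [Fintype α] [AddCommGroup G] [Fintype G]
    {Ψ : AddChar G ℂ} (hΨ : Ψ ≠ 1) (g : α → G) {B : ℕ}
    (hB : ∀ c, ({a | g a = c} : Finset α).card ≤ B) :
    ‖∑ a, Ψ (g a)‖ ≤ Fintype.card G * B - Fintype.card α := by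
  set N : G → ℕ := fun c ↦ ({a | g a = c} : Finset α).card
  have hcard : ∑ c, N c = Fintype.card α :=
    (Finset.card_eq_sum_card_fiberwise fun _ _ ↦ Finset.mem_coe.2 (Finset.mem_univ _)).symm
  have hsum : ∑ a, Ψ (g a) = ∑ c, (N c : ℂ) * Ψ c := by
    rw [← Finset.sum_fiberwise Finset.univ g]
    refine Finset.sum_congr rfl fun c _ ↦ ?_
    rw [Finset.sum_congr rfl fun a ha ↦ congrArg Ψ (Finset.mem_filter.1 ha).2, Finset.sum_const,
      nsmul_eq_mul]
  have hshift : ∑ c, (N c : ℂ) * Ψ c = -∑ c, ((B - N c : ℝ) : ℂ) * Ψ c := by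
    push_cast
    simp only [sub_mul, Finset.sum_sub_distrib, ← Finset.mul_sum,
      AddChar.sum_eq_zero_of_ne_one hΨ, mul_zero, zero_sub, neg_neg]
  rw [hsum, hshift, norm_neg]
  calc ‖∑ c, ((B - N c : ℝ) : ℂ) * Ψ c‖ ≤ ∑ c, (B - N c : ℝ) := by
        refine norm_sum_le_of_le _ fun c _ ↦ ?_
        rw [norm_mul, AddChar.norm_apply, mul_one, Complex.norm_real, Real.norm_of_nonneg]
        exact sub_nonneg.2 (Nat.cast_le.2 (hB c))
    _ = Fintype.card G * B - Fintype.card α := by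
        rw [Finset.sum_sub_distrib, ← hcard]
        simp

-- Invariance of `Ψ` under Frobenius makes it trivial on the differences `y ^ p - y`, so the sum
-- extends to the pairs `(x, y)`, on which `f(x) - (y ^ p - y)` is almost equidistributed.
theorem norm_sum_addChar_eval_le {K : Type*} [Field K] [Fintype K] {p s : ℕ} [Fact p.Prime]
    [CharP K p] (hK : Fintype.card K = p ^ (2 * (s + 1))) {f : K[X]}
    (hpf : p.Coprime f.natDegree) (hs : 4 * (f.natDegree + 1) ^ 2 * p ≤ p ^ s)
    {Ψ : AddChar K ℂ} (hΨ : Ψ ≠ 1) (hfrob : ∀ y, Ψ (y ^ p) = Ψ y) :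
    ‖∑ x, Ψ (f.eval x)‖ ≤ (2 * p * f.natDegree + 1) * p ^ (s + 1) := by
  have hfiber : ∀ c, ({z : K × K | f.eval z.1 - (z.2 ^ p - z.2) = c} : Finset (K × K)).card ≤
      (p ^ (s + 1)) ^ 2 + (2 * p * f.natDegree + 1) * p ^ (s + 1) := fun c ↦ by
    rw [← natDegree_sub_C (a := c)] at hpf hs ⊢
    convert card_artinSchreier_points_le hK hpf hs using 3 with z
    rw [eval_sub, eval_C, eq_sub_iff_add_eq]
    constructor <;> intro h <;> linear_combination -h
  have hsum : ∑ z : K × K, Ψ (f.eval z.1 - (z.2 ^ p - z.2)) =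
      Fintype.card K * ∑ x, Ψ (f.eval x) := by
    have (y : K) : Ψ (y ^ p - y) = 1 := by
      rw [AddChar.map_sub_eq_div, hfrob, div_self (AddChar.val_isUnit Ψ y).ne_zero]
    simp [Fintype.sum_prod_type, AddChar.map_sub_eq_div, this, Finset.mul_sum]
  have hbound := norm_sum_addChar_le_of_card_fiber_le hΨ _ hfiber
  have hpos : (0 : ℝ) < Fintype.card K := Nat.cast_pos.2 Fintype.card_pos
  rw [hsum, norm_mul, Complex.norm_natCast] at hbound
  refine le_of_mul_le_mul_left (hbound.trans_eq ?_) hpos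
  rw [Fintype.card_prod, hK]
  push_cast
  ring

end CharacterSums

/-! ### Monic polynomials, elementary symmetric functions and power sums -/

section MonicOfCoeffs

variable {R : Type*} [CommRing R] {n : ℕ}

/-- The monic polynomial `X ^ n + a₀ X ^ (n - 1) + ⋯ + aₙ₋₁`. -/
noncomputable def monicOfCoeffs (a : Fin n → R) : R[X] :=
  X ^ n + ∑ i : Fin n, C (a i) * X ^ (n - 1 - (i : ℕ))

lemma degree_sum_C_mul_X_pow_lt (a : Fin n → R) :
    (∑ i : Fin n, C (a i) * X ^ (n - 1 - (i : ℕ))).degree < (n : WithBot ℕ) := by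
  refine (degree_sum_le _ _).trans_lt ((Finset.sup_lt_iff (WithBot.bot_lt_coe n)).2 fun i _ ↦ ?_)
  exact (degree_C_mul_X_pow_le _ _).trans_lt (Nat.cast_lt.2 (by lia))

lemma monicOfCoeffs_monic (a : Fin n → R) : (monicOfCoeffs a).Monic :=
  monic_X_pow_add (degree_sum_C_mul_X_pow_lt a)

lemma natDegree_monicOfCoeffs [Nontrivial R] (a : Fin n → R) :
    (monicOfCoeffs a).natDegree = n := by
  rw [monicOfCoeffs, natDegree_add_eq_left_of_degree_lt, natDegree_X_pow]
  rw [degree_X_pow]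
  exact degree_sum_C_mul_X_pow_lt a

lemma coeff_monicOfCoeffs (a : Fin n → R) (i : Fin n) :
    (monicOfCoeffs a).coeff (n - 1 - i) = a i := by
  have hsum : ∑ j : Fin n, (C (a j) * X ^ (n - 1 - (j : ℕ))).coeff (n - 1 - i) = a i := by
    rw [Fintype.sum_eq_single i fun j hj ↦ ?_]
    · simp
    · rw [coeff_C_mul_X_pow, if_neg]
      exact fun h ↦ hj (Fin.ext (by lia))
  rw [monicOfCoeffs, coeff_add, coeff_X_pow, if_neg (by lia), zero_add, finsetSum_coeff, hsum]

lemma monicOfCoeffs_injective : Function.Injective (monicOfCoeffs : (Fin n → R) → R[X]) :=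
  fun a b h ↦ funext fun i ↦ by rw [← coeff_monicOfCoeffs a, h, coeff_monicOfCoeffs]

lemma exists_monicOfCoeffs_eq {h : R[X]} (hm : h.Monic) (hd : h.natDegree = n) :
    ∃ a : Fin n → R, monicOfCoeffs a = h := by
  refine ⟨fun i ↦ h.coeff (n - 1 - i), ?_⟩
  conv_rhs => rw [hm.as_sum, hd, ← Finset.sum_range_reflect, Finset.sum_range]
  rw [monicOfCoeffs]

variable [Fintype R]

/-- The monic polynomials of degree `d`. -/
noncomputable def monicsOfDegree (R : Type*) [CommRing R] [Fintype R] (d : ℕ) : Finset R[X] :=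
  Finset.univ.image (monicOfCoeffs : (Fin d → R) → R[X])

lemma mem_monicsOfDegree [Nontrivial R] {d : ℕ} {h : R[X]} :
    h ∈ monicsOfDegree R d ↔ h.Monic ∧ h.natDegree = d := by
  simp only [monicsOfDegree, Finset.mem_image, Finset.mem_univ, true_and]
  constructor
  · rintro ⟨a, rfl⟩
    exact ⟨monicOfCoeffs_monic a, natDegree_monicOfCoeffs a⟩
  · exact fun hh ↦ exists_monicOfCoeffs_eq hh.1 hh.2

lemma card_monicsOfDegree (d : ℕ) : (monicsOfDegree R d).card = Fintype.card R ^ d := by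
  simp [monicsOfDegree, Finset.card_image_of_injective _ monicOfCoeffs_injective]

end MonicOfCoeffs

section Newton

variable {R : Type*} [CommRing R]

/-- Newton's identities between the coefficients `e d` of a power series `∏ (1 - x T)` and the
power sums `P r = ∑ x ^ r`. -/
structure NewtonIdentities (e P : ℕ → R) : Prop where
  zero : e 0 = 1
  mul_eq (d : ℕ) : d * e d = -∑ i ∈ Finset.range d, e i * P (d - i)

lemma newtonIdentities_multiset (s : Multiset R) :
    NewtonIdentities (fun d ↦ (-1) ^ d * s.esymm d) fun r ↦ (s.map (· ^ r)).sum := by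
  obtain ⟨l, rfl⟩ := s.exists_rep
  change NewtonIdentities (fun d ↦ (-1) ^ d * (l : Multiset R).esymm d)
    fun r ↦ ((l : Multiset R).map (· ^ r)).sum
  have hl : Finset.univ.val.map l.get = (l : Multiset R) := by
    rw [Fin.univ_val_map, List.ofFn_get]
  have hpsum (k : ℕ) : MvPolynomial.aeval l.get (MvPolynomial.psum (Fin l.length) R k) =
      ((l : Multiset R).map (· ^ k)).sum := by
    rw [← hl, Multiset.map_map, MvPolynomial.psum, map_sum]
    simp only [map_pow, MvPolynomial.aeval_X]
    rfl
  refine ⟨by simp [Multiset.esymm], fun d ↦ ?_⟩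
  have h := congrArg (MvPolynomial.aeval l.get)
    (MvPolynomial.mul_esymm_eq_sum (Fin l.length) R d)
  simp only [map_mul, map_natCast, map_sum, map_pow, map_neg, map_one, hpsum,
    MvPolynomial.aeval_esymm_eq_multiset_esymm, hl] at h
  rw [Finset.sum_filter, Finset.Nat.sum_antidiagonal_eq_sum_range_succ_mk, Finset.sum_range_succ,
    if_neg (lt_irrefl d), add_zero,
    Finset.sum_congr rfl fun i hi ↦ if_pos (Finset.mem_range.1 hi)] at h
  rw [mul_left_comm, h, ← mul_assoc, ← pow_add, show d + (d + 1) = 2 * d + 1 by ring,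
    (odd_two_mul_add_one d).neg_one_pow, neg_one_mul]

lemma NewtonIdentities.sub_eq {e e' P P' : ℕ → R} (h : NewtonIdentities e P)
    (h' : NewtonIdentities e' P') {n : ℕ} (hn : n ≠ 0) (he : ∀ i < n, e i = e' i) :
    P n - P' n = -n * (e n - e' n) := by
  induction n using Nat.strong_induction_on with
  | _ n ih =>
    have hP : ∀ j < n, j ≠ 0 → P j = P' j := fun j hj hj0 ↦ by
      have := ih j hj hj0 fun i hi ↦ he i (hi.trans hj)
      rwa [he j hj, sub_self, mul_zero, sub_eq_zero] at this
    obtain ⟨k, rfl⟩ := Nat.exists_eq_succ_of_ne_zero hn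
    have htail : ∑ i ∈ Finset.range k, e (i + 1) * P (k + 1 - (i + 1)) =
        ∑ i ∈ Finset.range k, e' (i + 1) * P' (k + 1 - (i + 1)) :=
      Finset.sum_congr rfl fun i hi ↦ by
        rw [Finset.mem_range] at hi
        rw [he (i + 1) (by lia), hP _ (by lia) (by lia)]
    have hk := h.mul_eq (k + 1)
    have hk' := h'.mul_eq (k + 1)
    rw [Finset.sum_range_succ', Nat.sub_zero, h.zero, htail] at hk
    rw [Finset.sum_range_succ', Nat.sub_zero, h'.zero] at hk'
    linear_combination hk - hk'

lemma NewtonIdentities.eq_of_forall_eq {e P P' : ℕ → R} (h : NewtonIdentities e P)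
    (h' : NewtonIdentities e P') {n : ℕ} (hn : n ≠ 0) : P n = P' n := by
  have := h.sub_eq h' hn fun _ _ ↦ rfl
  rwa [sub_self, mul_zero, sub_eq_zero] at this

lemma multisetSum_map_pow_mul_eval (s : Multiset R) (f : R[X]) (t : ℕ) :
    (s.map fun x ↦ x ^ t * f.eval x).sum =
      ∑ j ∈ Finset.range (f.natDegree + 1), f.coeff j * (s.map (· ^ (t + j))).sum := by
  simp only [eval_eq_sum_range, Finset.mul_sum, Multiset.sum_map_sum, pow_add,
    ← Multiset.sum_map_mul_left, mul_left_comm]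

variable {k Ω : Type*} [Field k] [Field Ω] [Algebra k Ω] [IsAlgClosed Ω]

lemma signed_esymm_aroots {h : k[X]} (hm : h.Monic) {i : ℕ} (hi : i ≤ h.natDegree) :
    (-1) ^ i * (h.aroots Ω).esymm i = algebraMap k Ω (h.coeff (h.natDegree - i)) := by
  have := coeff_eq_esymm_roots_of_splits
    (IsAlgClosed.splits (h.map (algebraMap k Ω))) (k := h.natDegree - i) (by simp)
  rw [coeff_map, (hm.map _).leadingCoeff, natDegree_map, one_mul, Nat.sub_sub_self hi] at this
  exact this.symm

lemma card_aroots_eq_natDegree (h : k[X]) : (h.aroots Ω).card = h.natDegree := by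
  rw [aroots, splits_iff_card_roots.1 (IsAlgClosed.splits _), natDegree_map]

-- `∑ c d T ^ d` is a polynomial of degree less than `n`; the `w` are its inverse roots.
lemma exists_multiset_power_sums_eq {n : ℕ} (hn : n ≠ 0) {c P : ℕ → Ω}
    (hN : NewtonIdentities c P) (hc : ∀ d, n ≤ d → c d = 0) :
    ∃ w : Multiset Ω, w.card = n - 1 ∧ ∀ r ≠ 0, P r = (w.map (· ^ r)).sum := by
  let h : Polynomial Ω := monicOfCoeffs fun i : Fin (n - 1) ↦ c (i + 1)
  have hdeg : h.natDegree = n - 1 := natDegree_monicOfCoeffs _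
  have hm : h.Monic := monicOfCoeffs_monic _
  have hcard : (h.aroots Ω).card = n - 1 := by rw [card_aroots_eq_natDegree, hdeg]
  have hesymm : (fun d ↦ (-1) ^ d * (h.aroots Ω).esymm d) = c := by
    funext d
    rcases lt_or_ge d n with hd | hd
    · rw [signed_esymm_aroots hm (by lia), Algebra.algebraMap_self_apply]
      rcases d with _ | d
      · rw [Nat.sub_zero, hm.coeff_natDegree, hN.zero]
      · rw [hdeg, show n - 1 - (d + 1) = n - 1 - 1 - d by lia]
        exact coeff_monicOfCoeffs (fun i : Fin (n - 1) ↦ c (i + 1)) ⟨d, by lia⟩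
    · rw [hc d hd, Multiset.esymm, Multiset.powersetCard_eq_empty _ (by lia)]
      simp
  exact ⟨h.aroots Ω, hcard, fun r hr ↦
    hN.eq_of_forall_eq (hesymm ▸ newtonIdentities_multiset (h.aroots Ω)) hr⟩

end Newton

lemma norm_le_one_of_norm_power_sums_le {w : Multiset ℂ} {M : ℝ} {t₀ : ℕ}
    (hw : ∀ t ≥ t₀, ‖(w.map (· ^ t)).sum‖ ≤ M) {z : ℂ} (hz : z ∈ w) : ‖z‖ ≤ 1 := by
  by_contra! hgt
  let f : ℂ[X] := ∏ y ∈ w.toFinset.erase z, (X - C y)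
  have hfz : f.eval z ≠ 0 := by
    simp only [f, eval_prod, Finset.prod_ne_zero_iff, eval_sub, eval_X, eval_C, sub_ne_zero]
    exact fun y hy ↦ (Finset.ne_of_mem_erase hy).symm
  have hpick (t : ℕ) : (w.map fun y ↦ y ^ t * f.eval y).sum = w.count z * (z ^ t * f.eval z) := by
    rw [Finset.sum_multiset_map_count, Finset.sum_eq_single z, nsmul_eq_mul]
    · intro y hy hyz
      rw [eval_prod, Finset.prod_eq_zero (Finset.mem_erase.2 ⟨hyz, hy⟩) (by simp), mul_zero,
        smul_zero]
    · exact fun h ↦ absurd (Multiset.mem_toFinset.2 hz) h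
  have hbound : ∀ t ≥ t₀, ‖z‖ ^ t * ‖f.eval z‖ ≤
      ∑ j ∈ Finset.range (f.natDegree + 1), ‖f.coeff j‖ * M := fun t ht ↦ by
    have hcount : (1 : ℝ) ≤ w.count z := Nat.one_le_cast.2 (Multiset.one_le_count_iff_mem.2 hz)
    calc ‖z‖ ^ t * ‖f.eval z‖ ≤ w.count z * (‖z‖ ^ t * ‖f.eval z‖) :=
          le_mul_of_one_le_left (by positivity) hcount
      _ = ‖∑ j ∈ Finset.range (f.natDegree + 1), f.coeff j * (w.map (· ^ (t + j))).sum‖ := by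
          rw [← multisetSum_map_pow_mul_eval, hpick]
          simp
      _ ≤ ∑ j ∈ Finset.range (f.natDegree + 1), ‖f.coeff j‖ * M := by
          refine norm_sum_le_of_le _ fun j _ ↦ ?_
          rw [norm_mul]
          gcongr
          exact hw _ (by lia)
  obtain ⟨t, ht⟩ := pow_unbounded_of_one_lt
    ((∑ j ∈ Finset.range (f.natDegree + 1), ‖f.coeff j‖ * M) / ‖f.eval z‖) hgt
  rw [div_lt_iff₀ (norm_pos_iff.2 hfz)] at ht
  refine absurd (hbound (t + t₀) (by lia)) (not_le.2 (ht.trans_le ?_))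
  gcongr
  · exact hgt.le
  · lia

/-! ### The L-function of an additive character and the Weil bound -/

section LFunction

variable {F Ω : Type*} [Field F] [Field Ω] [Algebra F Ω]

/-- The multiplicative function on polynomials which sends `h` to the value of the additive
character `Ψ` at the sum of `f` over the roots of `h`. -/
noncomputable def rootCharacter (f : F[X]) (Ψ : AddChar Ω ℂ) (h : F[X]) : ℂ :=
  Ψ ((h.aroots Ω).map (aeval · f)).sum

variable (f : F[X]) (Ψ : AddChar Ω ℂ)

lemma rootCharacter_one : rootCharacter f Ψ 1 = 1 := by
  simp [rootCharacter]

lemma rootCharacter_mul {g h : F[X]} (hg : g ≠ 0) (hh : h ≠ 0) :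
    rootCharacter f Ψ (g * h) = rootCharacter f Ψ g * rootCharacter f Ψ h := by
  rw [rootCharacter, aroots_mul (mul_ne_zero hg hh), Multiset.map_add, Multiset.sum_add,
    AddChar.map_add_eq_mul]
  rfl

lemma multisetSum_map_aeval (s : Multiset Ω) :
    (s.map (aeval · f)).sum = ∑ j ∈ Finset.range (f.natDegree + 1),
      algebraMap F Ω (f.coeff j) * (s.map (· ^ j)).sum := by
  simpa using multisetSum_map_pow_mul_eval s (f.map (algebraMap F Ω)) 0

variable {f}

lemma degree_C_mul_X_pow_sub_lt {h : F[X]} (hh : h ≠ 0) {n : ℕ} (hn : n ≠ 0)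
    (hnh : n ≤ h.natDegree) (c : F) : (C c * X ^ (h.natDegree - n)).degree < h.degree := by
  rw [degree_eq_natDegree hh]
  exact (degree_C_mul_X_pow_le _ _).trans_lt (Nat.cast_lt.2 (by lia))

-- The change affects neither the first `n - 1` elementary symmetric functions of the roots nor,
-- by Newton's identities, their first `n - 1` power sums; the `n`-th power sum changes by `-n c`.
lemma rootCharacter_add_C_mul_X_pow [IsAlgClosed Ω] (hn : f.natDegree ≠ 0) {h : F[X]}
    (hm : h.Monic) (hnh : f.natDegree ≤ h.natDegree) (c : F) :
    rootCharacter f Ψ (h + C c * X ^ (h.natDegree - f.natDegree)) =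
      Ψ (algebraMap F Ω (-f.natDegree * f.leadingCoeff * c)) * rootCharacter f Ψ h := by
  set n := f.natDegree
  have hdeg := degree_C_mul_X_pow_sub_lt hm.ne_zero hn hnh c
  set g := h + C c * X ^ (h.natDegree - n)
  have hgd : g.natDegree = h.natDegree := natDegree_add_eq_left_of_degree_lt hdeg
  have hesymm {i : ℕ} (hi : i ≤ n) : (-1) ^ i * (g.aroots Ω).esymm i =
      (-1) ^ i * (h.aroots Ω).esymm i + if i = n then algebraMap F Ω c else 0 := by
    rw [signed_esymm_aroots (hm.add_of_left hdeg) (by lia), signed_esymm_aroots hm (by lia), hgd,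
      coeff_add, coeff_C_mul_X_pow, map_add]
    congr 1
    split_ifs <;> first | rfl | exact map_zero _ | lia
  have hpsum {j : ℕ} (hj : j ≤ n) : ((g.aroots Ω).map (· ^ j)).sum =
      ((h.aroots Ω).map (· ^ j)).sum + if j = n then -n * algebraMap F Ω c else 0 := by
    rcases eq_or_ne j 0 with rfl | hj0
    · simp [card_aroots_eq_natDegree, hgd, hn.symm]
    rw [← sub_eq_iff_eq_add', (newtonIdentities_multiset _).sub_eq (newtonIdentities_multiset _) hj0
      fun i hi ↦ by rw [hesymm (hi.le.trans hj), if_neg (by lia), add_zero], hesymm hj,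
      add_sub_cancel_left]
    split_ifs with h
    · rw [h]
    · rw [mul_zero]
  rw [rootCharacter, rootCharacter, ← AddChar.map_add_eq_mul, multisetSum_map_aeval,
    multisetSum_map_aeval, Finset.sum_congr rfl fun j hj ↦ by
      rw [hpsum (Nat.lt_succ_iff.1 (Finset.mem_range.1 hj)), mul_add],
    Finset.sum_add_distrib, add_comm]
  congr 2
  simp only [mul_ite, mul_zero]
  rw [Finset.sum_ite_eq', if_pos (Finset.self_mem_range_succ _), map_mul, map_mul, map_neg,
    map_natCast, leadingCoeff]
  ring

variable [Fintype F] (f)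

/-- The coefficient of `T ^ d` in the L-function of `Ψ` along `f`. -/
noncomputable def lFunctionCoeff (d : ℕ) : ℂ := ∑ h ∈ monicsOfDegree F d, rootCharacter f Ψ h

lemma lFunctionCoeff_zero : lFunctionCoeff f Ψ 0 = 1 := by
  simp [lFunctionCoeff, monicsOfDegree, monicOfCoeffs, rootCharacter_one]

variable {f Ψ}

lemma lFunctionCoeff_eq_zero [IsAlgClosed Ω] (hn : (f.natDegree : F) ≠ 0)
    (hΨ : ∃ a : F, Ψ (algebraMap F Ω a) ≠ 1) {d : ℕ} (hd : f.natDegree ≤ d) :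
    lFunctionCoeff f Ψ d = 0 := by
  obtain ⟨a, ha⟩ := hΨ
  have hn0 : f.natDegree ≠ 0 := fun h ↦ hn (by rw [h, Nat.cast_zero])
  have hlc : f.leadingCoeff ≠ 0 := leadingCoeff_ne_zero.2 fun h ↦ hn0 (by rw [h, natDegree_zero])
  set c : F := -a / (f.natDegree * f.leadingCoeff)
  have hmem (b : F) {h : F[X]} (hh : h ∈ monicsOfDegree F d) :
      h + C b * X ^ (d - f.natDegree) ∈ monicsOfDegree F d := by
    obtain ⟨hm, rfl⟩ := mem_monicsOfDegree.1 hh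
    have hdeg := degree_C_mul_X_pow_sub_lt hm.ne_zero hn0 hd b
    exact mem_monicsOfDegree.2
      ⟨hm.add_of_left hdeg, natDegree_add_eq_left_of_degree_lt hdeg⟩
  have htranslate : lFunctionCoeff f Ψ d = Ψ (algebraMap F Ω a) * lFunctionCoeff f Ψ d := by
    rw [lFunctionCoeff, Finset.mul_sum, eq_comm]
    refine Finset.sum_bij' (fun h _ ↦ h + C c * X ^ (d - f.natDegree))
      (fun h _ ↦ h + C (-c) * X ^ (d - f.natDegree)) (fun h ↦ hmem c) (fun h ↦ hmem (-c))
      (by simp) (by simp) fun h hh ↦ ?_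
    obtain ⟨hm, rfl⟩ := mem_monicsOfDegree.1 hh
    rw [rootCharacter_add_C_mul_X_pow Ψ hn0 hm hd]
    congr 3
    simp only [c]
    field_simp
  exact (mul_left_eq_self₀.1 htranslate.symm).resolve_left ha

end LFunction

section FrobeniusFixed

variable {F Ω : Type*} [Field F] [Field Ω]

/-- The characteristic polynomial over `F` of the element `x` of the extension of degree `r`, which
contains `x` when the degree of `x` over `F` divides `r`; other values of `r` are junk. -/
noncomputable def charpolyOfDegree (F : Type*) {Ω : Type*} [Field F] [Field Ω] [Algebra F Ω] (x : Ω)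
    (r : ℕ) : F[X] :=
  minpoly F x ^ (r / (minpoly F x).natDegree)

lemma charpolyOfDegree_monic [Algebra F Ω] [Algebra.IsAlgebraic F Ω] (x : Ω) (r : ℕ) :
    (charpolyOfDegree F x r).Monic :=
  (minpoly.monic (Algebra.IsIntegral.isIntegral x)).pow _

lemma minpoly_pow_dvd_iff_le_count_aroots [Algebra F Ω] [Algebra.IsAlgebraic F Ω] [PerfectField F]
    (x : Ω) {h : F[X]} (hh : h ≠ 0) (k : ℕ) :
    minpoly F x ^ k ∣ h ↔ k ≤ (h.aroots Ω).count x := by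
  have hirr : Irreducible (minpoly F x) := minpoly.irreducible (Algebra.IsIntegral.isIntegral x)
  have hfin := FiniteMultiplicity.of_not_isUnit hirr.not_isUnit hh
  obtain ⟨g, hg, hng⟩ := hfin.exists_eq_pow_mul_and_not_dvd
  have hminpoly : ((minpoly F x).aroots Ω).count x = 1 :=
    Multiset.count_eq_one_of_mem
      (nodup_roots ((separable_map _).2 (PerfectField.separable_of_irreducible hirr)))
      (mem_aroots.2 ⟨hirr.ne_zero, minpoly.aeval _ _⟩)
  have hcofactor : (g.aroots Ω).count x = 0 :=
    Multiset.count_eq_zero.2 fun hx ↦ hng (minpoly.dvd _ _ (mem_aroots.1 hx).2)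
  have hcount : (h.aroots Ω).count x = multiplicity (minpoly F x) h := by
    conv_lhs => rw [hg]
    rw [aroots_mul (hg ▸ hh), aroots_pow, Multiset.count_add, Multiset.count_nsmul, hminpoly,
      hcofactor, add_zero, mul_one]
  rw [hcount, hfin.pow_dvd_iff_le_multiplicity]

variable [Fintype F]

/-- The elements of `Ω` fixed by the `r`-th power of the Frobenius of `F`, i.e. those of the
extension of degree `r`. -/
noncomputable def frobeniusFixed (F Ω : Type*) [Field F] [Fintype F] [Field Ω] (r : ℕ) : Finset Ω :=
  (X ^ Fintype.card F ^ r - X : Polynomial Ω).roots.toFinset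

lemma mem_frobeniusFixed_iff_pow_eq {r : ℕ} (hr : r ≠ 0) {x : Ω} :
    x ∈ frobeniusFixed F Ω r ↔ x ^ Fintype.card F ^ r = x := by
  rw [frobeniusFixed, Multiset.mem_toFinset, mem_roots
    (FiniteField.X_pow_card_pow_sub_X_ne_zero _ hr Fintype.one_lt_card)]
  simp [sub_eq_zero]

lemma card_frobeniusFixed_le {r : ℕ} (hr : r ≠ 0) :
    (frobeniusFixed F Ω r).card ≤ Fintype.card F ^ r := by
  refine (Multiset.toFinset_card_le _).trans ((card_roots' _).trans_eq ?_)
  exact FiniteField.X_pow_card_pow_sub_X_natDegree_eq _ hr Fintype.one_lt_card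

variable [Algebra F Ω]

lemma image_algHom_eq_frobeniusFixed {K : Type*} [Field K] [Fintype K] [Algebra F K]
    (φ : K →ₐ[F] Ω) : Finset.univ.image φ = frobeniusFixed F Ω (Module.finrank F K) := by
  have hr : Module.finrank F K ≠ 0 := Module.finrank_pos.ne'
  have hcard : Fintype.card K = Fintype.card F ^ Module.finrank F K := Module.card_eq_pow_finrank
  refine Finset.eq_of_subset_of_card_le (fun y hy ↦ ?_) ?_
  · obtain ⟨x, -, rfl⟩ := Finset.mem_image.1 hy
    rw [mem_frobeniusFixed_iff_pow_eq hr, ← map_pow, ← hcard, FiniteField.pow_card]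
  · rw [Finset.card_image_of_injective (f := φ) _ φ.injective, Finset.card_univ, hcard]
    exact card_frobeniusFixed_le hr

variable [Algebra.IsAlgebraic F Ω]

lemma mem_frobeniusFixed_iff_natDegree_dvd {r : ℕ} (hr : r ≠ 0) {x : Ω} :
    x ∈ frobeniusFixed F Ω r ↔ (minpoly F x).natDegree ∣ r := by
  rw [mem_frobeniusFixed_iff_pow_eq hr, (minpoly.irreducible
    (Algebra.IsIntegral.isIntegral x)).natDegree_dvd_iff_dvd_X_pow_card_pow_sub_X,
    Nat.card_eq_fintype_card, minpoly.dvd_iff]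
  simp [sub_eq_zero]

lemma natDegree_charpolyOfDegree {r : ℕ} (hr : r ≠ 0) {x : Ω} (hx : x ∈ frobeniusFixed F Ω r) :
    (charpolyOfDegree F x r).natDegree = r := by
  rw [charpolyOfDegree, natDegree_pow,
    Nat.div_mul_cancel ((mem_frobeniusFixed_iff_natDegree_dvd hr).1 hx)]

lemma card_filter_charpolyOfDegree_dvd (x : Ω) {h : F[X]} (hh : h ≠ 0) :
    ({r ∈ Finset.Icc 1 h.natDegree | x ∈ frobeniusFixed F Ω r ∧ charpolyOfDegree F x r ∣ h}).card =
      (h.aroots Ω).count x := by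
  set e := (minpoly F x).natDegree
  have he : 0 < e := minpoly.natDegree_pos (Algebra.IsIntegral.isIntegral x)
  have hdvd (k : ℕ) : charpolyOfDegree F x (e * k) ∣ h ↔ k ≤ (h.aroots Ω).count x := by
    rw [charpolyOfDegree, Nat.mul_div_cancel_left _ he, minpoly_pow_dvd_iff_le_count_aroots x hh]
  have himage :
      ({r ∈ Finset.Icc 1 h.natDegree | x ∈ frobeniusFixed F Ω r ∧ charpolyOfDegree F x r ∣ h}) =
        (Finset.Icc 1 ((h.aroots Ω).count x)).image (e * ·) := by
    ext r
    simp only [Finset.mem_filter, Finset.mem_Icc, Finset.mem_image]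
    constructor
    · rintro ⟨⟨hr, -⟩, hx, hr_dvd⟩
      obtain ⟨k, rfl⟩ := (mem_frobeniusFixed_iff_natDegree_dvd (by lia)).1 hx
      exact ⟨k, ⟨Nat.pos_of_mul_pos_left hr, (hdvd k).1 hr_dvd⟩, rfl⟩
    · rintro ⟨k, ⟨hk, hle⟩, rfl⟩
      have hr : e * k ≠ 0 := (Nat.mul_pos he hk).ne'
      have hx := (mem_frobeniusFixed_iff_natDegree_dvd (x := x) hr).2 (dvd_mul_right e k)
      have hr_dvd := (hdvd k).2 hle
      refine ⟨⟨Nat.one_le_iff_ne_zero.2 hr, ?_⟩, hx, hr_dvd⟩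
      exact (natDegree_charpolyOfDegree hr hx).symm.trans_le (natDegree_le_of_dvd hr_dvd hh)
  rw [himage, Finset.card_image_of_injective _ fun a b ↦ Nat.eq_of_mul_eq_mul_left he,
    Nat.card_Icc, Nat.add_sub_cancel]

lemma sum_card_filter_charpolyOfDegree_dvd [IsAlgClosed Ω] {h : F[X]} (hh : h ≠ 0) :
    ∑ r ∈ Finset.Icc 1 h.natDegree,
      ({x ∈ frobeniusFixed F Ω r | charpolyOfDegree F x r ∣ h}).card = h.natDegree := by
  have hroots : ∀ r ∈ Finset.Icc 1 h.natDegree,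
      ({x ∈ frobeniusFixed F Ω r | charpolyOfDegree F x r ∣ h}) =
        {x ∈ (h.aroots Ω).toFinset | x ∈ frobeniusFixed F Ω r ∧ charpolyOfDegree F x r ∣ h} := by
    intro r hr
    have hr0 : r ≠ 0 := by
      rintro rfl
      simp at hr
    ext x
    simp only [Finset.mem_filter, Multiset.mem_toFinset, iff_and_self, mem_aroots]
    rintro ⟨hx, hdvd⟩
    have he := (mem_frobeniusFixed_iff_natDegree_dvd hr0).1 hx
    have hpow : r / (minpoly F x).natDegree ≠ 0 :=
      (Nat.div_pos (Nat.le_of_dvd (by lia) he)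
        (minpoly.natDegree_pos (Algebra.IsIntegral.isIntegral x))).ne'
    exact ⟨hh, (minpoly.dvd_iff).1 ((dvd_pow_self _ hpow).trans hdvd)⟩
  rw [Finset.sum_congr rfl fun r hr ↦ congrArg Finset.card (hroots r hr)]
  simp only [Finset.card_filter]
  rw [Finset.sum_comm]
  simp only [← Finset.card_filter, card_filter_charpolyOfDegree_dvd _ hh]
  rw [Multiset.toFinset_sum_count_eq, card_aroots_eq_natDegree]

end FrobeniusFixed

section RootCharacterSum

variable {F Ω : Type*} [Field F] [Fintype F] [Field Ω] [Algebra F Ω] (f : F[X]) (Ψ : AddChar Ω ℂ)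

/-- The exponential sum of `f` over the extension of `F` of degree `r`. -/
noncomputable def rootCharacterSum (r : ℕ) : ℂ :=
  ∑ x ∈ frobeniusFixed F Ω r, rootCharacter f Ψ (charpolyOfDegree F x r)

lemma sum_rootCharacter_filter_dvd {d : ℕ} {q : F[X]} (hq : q.Monic) (hd : q.natDegree ≤ d) :
    ∑ h ∈ monicsOfDegree F d with q ∣ h, rootCharacter f Ψ h =
      rootCharacter f Ψ q * lFunctionCoeff f Ψ (d - q.natDegree) := by
  have himage : {h ∈ monicsOfDegree F d | q ∣ h} =
      (monicsOfDegree F (d - q.natDegree)).image (q * ·) := by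
    ext h
    simp only [Finset.mem_filter, Finset.mem_image, mem_monicsOfDegree]
    constructor
    · rintro ⟨⟨hm, hdeg⟩, g, rfl⟩
      have hg : g.Monic := hq.of_mul_monic_left hm
      rw [hq.natDegree_mul hg] at hdeg
      exact ⟨g, ⟨hg, by lia⟩, rfl⟩
    · rintro ⟨g, ⟨hg, hdeg⟩, rfl⟩
      exact ⟨⟨hq.mul hg, by rw [hq.natDegree_mul hg]; lia⟩, dvd_mul_right _ _⟩
  rw [himage, Finset.sum_image fun a _ b _ ↦ mul_left_cancel₀ hq.ne_zero, lFunctionCoeff,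
    Finset.mul_sum]
  exact Finset.sum_congr rfl fun g hg ↦
    rootCharacter_mul f Ψ hq.ne_zero (mem_monicsOfDegree.1 hg).1.ne_zero

variable [IsAlgClosed Ω] [Algebra.IsAlgebraic F Ω]

-- The logarithmic derivative of the Euler product of the L-function.
lemma newtonIdentities_lFunctionCoeff :
    NewtonIdentities (lFunctionCoeff f Ψ) fun r ↦ -rootCharacterSum f Ψ r := by
  refine ⟨lFunctionCoeff_zero f Ψ, fun d ↦ ?_⟩
  have hterm : ∀ r ∈ Finset.Icc 1 d, lFunctionCoeff f Ψ (d - r) * rootCharacterSum f Ψ r =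
      ∑ h ∈ monicsOfDegree F d,
        ({x ∈ frobeniusFixed F Ω r | charpolyOfDegree F x r ∣ h}).card * rootCharacter f Ψ h := by
    intro r hr
    rw [Finset.mem_Icc] at hr
    have hx : ∀ x ∈ frobeniusFixed F Ω r,
        lFunctionCoeff f Ψ (d - r) * rootCharacter f Ψ (charpolyOfDegree F x r) =
          ∑ h ∈ monicsOfDegree F d,
            if charpolyOfDegree F x r ∣ h then rootCharacter f Ψ h else 0 := fun x hx ↦ by
      have hdeg := natDegree_charpolyOfDegree (by lia) hx
      rw [← Finset.sum_filter, sum_rootCharacter_filter_dvd f Ψ (charpolyOfDegree_monic x r)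
        (by lia), hdeg, mul_comm]
    rw [rootCharacterSum, Finset.mul_sum, Finset.sum_congr rfl hx, Finset.sum_comm]
    simp only [← Finset.sum_filter, Finset.sum_const, nsmul_eq_mul]
  have hreflect : ∑ i ∈ Finset.range d, lFunctionCoeff f Ψ i * rootCharacterSum f Ψ (d - i) =
      ∑ r ∈ Finset.Icc 1 d, lFunctionCoeff f Ψ (d - r) * rootCharacterSum f Ψ r := by
    refine Finset.sum_nbij' (d - ·) (d - ·) ?_ ?_ ?_ ?_ fun i hi ↦ ?_ <;>
      simp only [Finset.mem_range, Finset.mem_Icc] at * <;> try lia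
    rw [Nat.sub_sub_self hi.le]
  simp only [mul_neg, Finset.sum_neg_distrib, neg_neg]
  rw [hreflect, Finset.sum_congr rfl hterm, Finset.sum_comm, lFunctionCoeff, Finset.mul_sum]
  refine Finset.sum_congr rfl fun h hh ↦ ?_
  obtain ⟨hm, rfl⟩ := mem_monicsOfDegree.1 hh
  rw [← Finset.sum_mul, ← Nat.cast_sum, sum_card_filter_charpolyOfDegree_dvd hm.ne_zero]

end RootCharacterSum

section TraceSum

variable {F K Ω : Type*} [Field F] [Field K] [Algebra F K] [FiniteDimensional F K]
  [Field Ω] [IsAlgClosed Ω] [Algebra F Ω] [PerfectField F]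

open IntermediateField in
lemma algebraMap_trace_aeval (φ : K →ₐ[F] Ω) (f : F[X]) (x : K) :
    algebraMap F Ω (Algebra.trace F K (aeval x f)) =
      (((charpolyOfDegree F (φ x) (Module.finrank F K)).aroots Ω).map (aeval · f)).sum := by
  have hx : IsIntegral F x := Algebra.IsIntegral.isIntegral x
  let pb := adjoin.powerBasis hx
  have hgen : algebraMap F⟮x⟯ K pb.gen = x := by simp [pb]
  have hminpoly : minpoly F (φ x) = minpoly F pb.gen := by
    rw [minpoly.algHom_eq φ φ.injective, ← minpoly.algebraMap_eq (algebraMap F⟮x⟯ K).injective,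
      hgen]
  have hquot : Module.finrank F K / (minpoly F pb.gen).natDegree = Module.finrank F⟮x⟯ K := by
    rw [← Module.finrank_mul_finrank F F⟮x⟯ K, pb.finrank, pb.natDegree_minpoly,
      Nat.mul_div_cancel_left _ pb.dim_pos]
  have hnodup : ((minpoly F pb.gen).aroots Ω).Nodup :=
    nodup_roots ((separable_map _).2 (PerfectField.separable_of_irreducible
      (minpoly.irreducible pb.isIntegral_gen)))
  have htrace : algebraMap F Ω (Algebra.trace F F⟮x⟯ (aeval pb.gen f)) =
      (((minpoly F pb.gen).aroots Ω).map (aeval · f)).sum := by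
    rw [trace_eq_sum_embeddings Ω, Fintype.sum_equiv pb.liftEquiv' _ fun y ↦ aeval (y : Ω) f]
    · rw [Finset.sum_mem_multiset (g := fun y ↦ aeval y f) _ _ fun _ ↦ rfl,
        Finset.sum_eq_multiset_sum, Multiset.toFinset_val, hnodup.dedup]
    · intro σ
      rw [PowerBasis.liftEquiv'_apply_coe, ← aeval_algHom_apply]
  rw [← congrArg (aeval · f) hgen, aeval_algebraMap_apply, ← Algebra.trace_trace (S := F⟮x⟯),
    Algebra.trace_algebraMap, charpolyOfDegree, hminpoly, hquot, aroots_pow, Multiset.map_nsmul,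
    Multiset.sum_nsmul, map_nsmul, map_nsmul, htrace]

lemma rootCharacterSum_finrank [Fintype F] [Fintype K] [Algebra.IsAlgebraic F Ω] (f : F[X])
    (Ψ : AddChar Ω ℂ) :
    rootCharacterSum f Ψ (Module.finrank F K) =
      ∑ x : K, Ψ (algebraMap F Ω (Algebra.trace F K (aeval x f))) := by
  let φ : K →ₐ[F] Ω := IsAlgClosed.lift
  have hφ : Function.Injective φ := φ.injective
  rw [rootCharacterSum, ← image_algHom_eq_frobeniusFixed φ, Finset.sum_image hφ.injOn]
  simp only [rootCharacter, algebraMap_trace_aeval φ]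

end TraceSum

section Weil

variable {p : ℕ} [Fact p.Prime] {ψ : AddChar (ZMod p) ℂ}

lemma norm_sum_addChar_trace_le {K : Type*} [Field K] [Fintype K] [Algebra (ZMod p) K]
    (hψ : ψ ≠ 1) {f : (ZMod p)[X]} (hpf : p.Coprime f.natDegree) {s : ℕ}
    (hs : 4 * (f.natDegree + 1) ^ 2 * p ≤ s) (hK : Fintype.card K = p ^ (2 * (s + 1))) :
    ‖∑ x : K, ψ (Algebra.trace (ZMod p) K (aeval x f))‖ ≤
      (2 * p * f.natDegree + 1) * (p : ℝ) ^ (s + 1) := by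
  have hp : p.Prime := Fact.out
  have : CharP K p := charP_of_injective_algebraMap (algebraMap (ZMod p) K).injective p
  let Ψ : AddChar K ℂ := ψ.compAddMonoidHom (Algebra.trace (ZMod p) K).toAddMonoidHom
  have hΨ : Ψ ≠ 1 := by
    obtain ⟨y, hy⟩ := AddChar.ne_one_iff.1 hψ
    obtain ⟨x, rfl⟩ := Algebra.trace_surjective (ZMod p) K y
    exact fun h ↦ hy (DFunLike.congr_fun h x)
  have hfrob (y : K) : Ψ (y ^ p) = Ψ y := by
    have := Algebra.trace_eq_of_algEquiv (FiniteField.frobeniusAlgEquivOfAlgebraic (ZMod p) K) y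
    exact congrArg ψ (by simpa using this)
  have hbound := norm_sum_addChar_eval_le hK (f := f.map (algebraMap (ZMod p) K))
    (by rwa [natDegree_map]) (by rw [natDegree_map]; exact hs.trans (Nat.lt_pow_self hp.one_lt).le)
    hΨ hfrob
  rw [natDegree_map] at hbound
  simpa only [eval_map_algebraMap] using! hbound

lemma exists_multiset_trace_sums_eq (hψ : ψ ≠ 1) {f : (ZMod p)[X]}
    (hpf : p.Coprime f.natDegree) (hf : f.natDegree ≠ 0) :
    ∃ w : Multiset ℂ, w.card = f.natDegree - 1 ∧
      ∀ (K : Type) [Field K] [Fintype K] [Algebra (ZMod p) K],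
        ∑ x : K, ψ (Algebra.trace (ZMod p) K (aeval x f)) =
          -(w.map (· ^ Module.finrank (ZMod p) K)).sum := by
  let Ω := AlgebraicClosure (ZMod p)
  obtain ⟨retraction, hretraction⟩ :=
    LinearMap.exists_leftInverse_of_injective (Algebra.linearMap (ZMod p) Ω)
      (LinearMap.ker_eq_bot.2 (algebraMap (ZMod p) Ω).injective)
  let Ψ : AddChar Ω ℂ := ψ.compAddMonoidHom retraction.toAddMonoidHom
  have hΨψ (a : ZMod p) : Ψ (algebraMap (ZMod p) Ω a) = ψ a :=
    congrArg ψ (LinearMap.congr_fun hretraction a)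
  have hΨ : ∃ a : ZMod p, Ψ (algebraMap (ZMod p) Ω a) ≠ 1 := by
    simpa only [hΨψ] using AddChar.ne_one_iff.1 hψ
  have hcast : (f.natDegree : ZMod p) ≠ 0 := ((ZMod.isUnit_iff_coprime _ _).2 hpf.symm).ne_zero
  obtain ⟨w, hcard, hsums⟩ := exists_multiset_power_sums_eq hf
    (newtonIdentities_lFunctionCoeff f Ψ) fun d hd ↦ lFunctionCoeff_eq_zero hcast hΨ hd
  refine ⟨w, hcard, fun K _ _ _ ↦ ?_⟩
  have : FiniteDimensional (ZMod p) K := inferInstance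
  rw [← hsums _ Module.finrank_pos.ne', neg_neg, rootCharacterSum_finrank]
  simp only [hΨψ]

theorem norm_sum_addChar_eval_le_sqrt (hψ : ψ ≠ 1) {f : (ZMod p)[X]} (hpf : p.Coprime f.natDegree)
    (hf : f.natDegree ≠ 0) :
    ‖∑ x, ψ (f.eval x)‖ ≤ (f.natDegree - 1 : ℕ) * √p := by
  have hp : p.Prime := Fact.out
  have hp0 : (0 : ℝ) < p := Nat.cast_pos.2 hp.pos
  obtain ⟨w, hcard, hw⟩ := exists_multiset_trace_sums_eq hψ hpf hf
  have hlarge {s : ℕ} (hs : 4 * (f.natDegree + 1) ^ 2 * p ≤ s) :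
      ‖((w.map fun z ↦ z ^ 2 / (p : ℂ)).map (· ^ (s + 1))).sum‖ ≤ 2 * p * f.natDegree + 1 := by
    have h0 : 2 * (s + 1) ≠ 0 := by lia
    let _ : Fintype (GaloisField p (2 * (s + 1))) := Fintype.ofFinite _
    have hK : Fintype.card (GaloisField p (2 * (s + 1))) = p ^ (2 * (s + 1)) := by
      rw [← Nat.card_eq_fintype_card, GaloisField.card p _ h0]
    have hbound := norm_sum_addChar_trace_le hψ hpf hs hK
    rw [hw, norm_neg, GaloisField.finrank p h0] at hbound
    rw [Multiset.map_map]
    simp only [Function.comp_def, div_pow, ← pow_mul, Multiset.sum_map_div]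
    rwa [norm_div, norm_pow, Complex.norm_natCast, div_le_iff₀ (pow_pos hp0 _)]
  have hroot : ∀ z ∈ w, ‖z‖ ≤ √p := fun z hz ↦ by
    have hnorm := norm_le_one_of_norm_power_sums_le (t₀ := 4 * (f.natDegree + 1) ^ 2 * p + 1)
      (fun t ht ↦ by
        obtain ⟨s, rfl⟩ := Nat.exists_eq_add_of_lt (Nat.lt_of_succ_le ht)
        exact hlarge (Nat.le_add_right _ _))
      (Multiset.mem_map_of_mem (fun z ↦ z ^ 2 / (p : ℂ)) hz)
    rw [norm_div, norm_pow, Complex.norm_natCast, div_le_one hp0] at hnorm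
    exact Real.le_sqrt_of_sq_le hnorm
  have hsum := hw (ZMod p)
  simp only [Algebra.trace_self_apply, coe_aeval_eq_eval, Module.finrank_self, pow_one,
    Multiset.map_id'] at hsum
  rw [hsum, norm_neg]
  calc ‖w.sum‖ ≤ (w.map norm).sum := norm_multiset_sum_le w
    _ ≤ (w.map norm).card • √p := Multiset.sum_le_card_nsmul _ _ (by simpa using hroot)
    _ = (f.natDegree - 1 : ℕ) * √p := by rw [Multiset.card_map, hcard, nsmul_eq_mul]

end Weil

/-! ### Fourier decay of translation-invariant sets of polynomials -/

section FourierDecay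

open scoped Nat

/-- The nontrivial Fourier coefficients of the indicator function of `S` are smaller than the
trivial one by a factor `√q / κ`. -/
def HasFourierDecay {q : ℕ} {ι : Type*} [Fintype ι] (S : Finset (ι → ZMod q)) (κ : ℝ) : Prop :=
  ∀ ψ : AddChar (ZMod q) ℂ, ψ ≠ 1 → ∀ g : ι → ZMod q, g ≠ 0 →
    ‖∑ a ∈ S, ψ (g ⬝ᵥ a)‖ ≤ S.card * (κ / √q)

variable {R : Type*} [CommRing R] {n : ℕ}

lemma exists_monicOfCoeffs_eq_taylor [Nontrivial R] (t : R) (a : Fin n → R) :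
    ∃ b : Fin n → R, monicOfCoeffs b = taylor t (monicOfCoeffs a) :=
  exists_monicOfCoeffs_eq ((leadingCoeff_taylor _ _).trans (monicOfCoeffs_monic a))
    (by rw [natDegree_taylor, natDegree_monicOfCoeffs])

/-- The permutation of the coefficients of monic polynomials induced by `P(X) ↦ P(X + t)`. -/
noncomputable def taylorPerm [Nontrivial R] (t : R) : Equiv.Perm (Fin n → R) where
  toFun a := (exists_monicOfCoeffs_eq_taylor t a).choose
  invFun a := (exists_monicOfCoeffs_eq_taylor (-t) a).choose
  left_inv a := monicOfCoeffs_injective <| by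
    rw [(exists_monicOfCoeffs_eq_taylor _ _).choose_spec,
      (exists_monicOfCoeffs_eq_taylor _ _).choose_spec, taylor_taylor, neg_add_cancel, taylor_zero]
  right_inv a := monicOfCoeffs_injective <| by
    rw [(exists_monicOfCoeffs_eq_taylor _ _).choose_spec,
      (exists_monicOfCoeffs_eq_taylor _ _).choose_spec, taylor_taylor, add_neg_cancel, taylor_zero]

lemma monicOfCoeffs_taylorPerm [Nontrivial R] (t : R) (a : Fin n → R) :
    monicOfCoeffs (taylorPerm t a) = taylor t (monicOfCoeffs a) :=
  (exists_monicOfCoeffs_eq_taylor t a).choose_spec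

/-- The polynomial function of `t` obtained by pairing `g` with the coefficients of `P(X + t)`. -/
noncomputable def taylorPairing (g : Fin n → R) (P : R[X]) : R[X] :=
  ∑ i : Fin n, C (g i) * hasseDeriv (n - 1 - i) P

lemma eval_taylorPairing [Nontrivial R] (g a : Fin n → R) (t : R) :
    (taylorPairing g (monicOfCoeffs a)).eval t = g ⬝ᵥ taylorPerm t a := by
  simp only [taylorPairing, eval_finsetSum, eval_mul, eval_C, ← taylor_coeff,
    ← monicOfCoeffs_taylorPerm, coeff_monicOfCoeffs, dotProduct]

lemma exists_natDegree_taylorPairing_eq [IsDomain R] (hn : (n ! : R) ≠ 0) {g : Fin n → R}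
    (hg : g ≠ 0) {P : R[X]} (hm : P.Monic) (hP : P.natDegree = n) :
    ∃ i : Fin n, (taylorPairing g P).natDegree = i + 1 := by
  have hsupp : (Finset.univ.filter fun i ↦ g i ≠ 0).Nonempty := by
    obtain ⟨i, hi⟩ := Function.ne_iff.1 hg
    exact ⟨i, Finset.mem_filter.2 ⟨Finset.mem_univ i, hi⟩⟩
  obtain ⟨i, hi⟩ := Finset.exists_max_image _ id hsupp
  have hgi : g i ≠ 0 := (Finset.mem_filter.1 hi.1).2
  have hmax (j : Fin n) (hj : i < j) : g j = 0 := by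
    by_contra h
    exact hj.not_ge (hi.2 j (Finset.mem_filter.2 ⟨Finset.mem_univ j, h⟩))
  have hchoose : (n.choose (n - 1 - i) : R) ≠ 0 := fun h ↦ hn <| by
    rw [← Nat.choose_mul_factorial_mul_factorial (show n - 1 - i ≤ n by lia), mul_assoc,
      Nat.cast_mul, h, zero_mul]
  have hterm (j : Fin n) (N : ℕ) (hN : i < N) (hne : (i : ℕ) + 1 = N → j ≠ i) :
      (C (g j) * hasseDeriv (n - 1 - j) P).coeff N = 0 := by
    rw [coeff_C_mul, hasseDeriv_coeff]
    rcases lt_or_ge i j with hij | hji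
    · rw [hmax j hij, zero_mul]
    · rw [coeff_eq_zero_of_natDegree_lt (p := P) (by lia), mul_zero, mul_zero]
  refine ⟨i, natDegree_eq_of_le_of_coeff_ne_zero
    (natDegree_le_iff_coeff_eq_zero.2 fun N hN ↦ ?_) ?_⟩
  · rw [taylorPairing, finsetSum_coeff]
    exact Finset.sum_eq_zero fun j _ ↦ hterm j N (by lia) (by lia)
  · rw [taylorPairing, finsetSum_coeff,
      Fintype.sum_eq_single i fun j hj ↦ hterm j _ (Nat.lt_succ_self _) fun _ ↦ hj, coeff_C_mul,
      hasseDeriv_coeff, show (i : ℕ) + 1 + (n - 1 - i) = n by lia]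
    have hlead : P.coeff n = 1 := hP ▸ hm
    rw [hlead, mul_one]
    exact mul_ne_zero hgi hchoose

variable {p : ℕ} [Fact p.Prime]

lemma norm_sum_addChar_taylorPairing_le (hnp : n < p) {ψ : AddChar (ZMod p) ℂ} (hψ : ψ ≠ 1)
    {g : Fin n → ZMod p} (hg : g ≠ 0) (a : Fin n → ZMod p) :
    ‖∑ t, ψ ((taylorPairing g (monicOfCoeffs a)).eval t)‖ ≤ n * √p := by
  have hp : p.Prime := Fact.out
  have hfactorial : (n ! : ZMod p) ≠ 0 := by
    rwa [Ne, ZMod.natCast_eq_zero_iff, hp.dvd_factorial, not_le]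
  obtain ⟨i, hi⟩ := exists_natDegree_taylorPairing_eq hfactorial hg (monicOfCoeffs_monic a)
    (natDegree_monicOfCoeffs a)
  have hcoprime : p.Coprime (taylorPairing g (monicOfCoeffs a)).natDegree := by
    rw [hi, hp.coprime_iff_not_dvd]
    exact fun h ↦ absurd (Nat.le_of_dvd (Nat.succ_pos _) h) (by lia)
  refine (norm_sum_addChar_eval_le_sqrt hψ hcoprime (by lia)).trans ?_
  gcongr
  lia

lemma sum_addChar_dotProduct_taylorPerm {Q : R[X] → Prop} (hQ : ∀ t P, Q (taylor t P) ↔ Q P)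
    [Fintype R] [Nontrivial R] (ψ : AddChar R ℂ) (g : Fin n → R) (t : R) :
    ∑ a : Fin n → R with Q (monicOfCoeffs a), ψ (g ⬝ᵥ taylorPerm t a) =
      ∑ a : Fin n → R with Q (monicOfCoeffs a), ψ (g ⬝ᵥ a) := by
  refine Finset.sum_equiv (taylorPerm t) (fun a ↦ ?_) fun a _ ↦ rfl
  simp only [Finset.mem_filter, Finset.mem_univ, true_and, monicOfCoeffs_taylorPerm, hQ]

-- Averaging over the translations turns a Fourier coefficient into a mean of complete sums.
lemma hasFourierDecay_of_taylor_invariant {Q : (ZMod p)[X] → Prop}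
    (hQ : ∀ t P, Q (taylor t P) ↔ Q P) :
    HasFourierDecay {a : Fin n → ZMod p | Q (monicOfCoeffs a)} n := by
  intro ψ hψ g hg
  set S : Finset (Fin n → ZMod p) := {a | Q (monicOfCoeffs a)}
  have hp0 : (0 : ℝ) < p := Nat.cast_pos.2 (Fact.out : p.Prime).pos
  rcases lt_or_ge n p with hnp | hpn
  · have haverage : (p : ℂ) * ∑ a ∈ S, ψ (g ⬝ᵥ a) =
        ∑ a ∈ S, ∑ t, ψ ((taylorPairing g (monicOfCoeffs a)).eval t) := by
      rw [Finset.sum_comm]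
      simp only [eval_taylorPairing]
      rw [Finset.sum_congr rfl fun t _ ↦ sum_addChar_dotProduct_taylorPerm hQ ψ g t,
        Finset.sum_const, Finset.card_univ, ZMod.card, nsmul_eq_mul]
    have hbound : p * ‖∑ a ∈ S, ψ (g ⬝ᵥ a)‖ ≤ S.card * (n * √p) := by
      have hnorm : p * ‖∑ a ∈ S, ψ (g ⬝ᵥ a)‖ = ‖(p : ℂ) * ∑ a ∈ S, ψ (g ⬝ᵥ a)‖ := by
        rw [norm_mul, Complex.norm_natCast]
      rw [hnorm, haverage, ← nsmul_eq_mul]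
      exact (norm_sum_le _ _).trans (Finset.sum_le_card_nsmul _ _ _ fun a _ ↦
        norm_sum_addChar_taylorPairing_le hnp hψ hg a)
    refine ((le_div_iff₀' hp0).2 hbound).trans_eq ?_
    rw [mul_div_assoc, mul_div_assoc, Real.sqrt_div_self', mul_one_div]
  · have hratio : 1 ≤ n / √p := by
      rw [one_le_div (Real.sqrt_pos.2 hp0), Real.sqrt_le_left (Nat.cast_nonneg n)]
      exact_mod_cast hpn.trans (Nat.le_self_pow two_ne_zero n)
    refine (norm_sum_le _ _).trans ?_
    simp only [AddChar.norm_apply, Finset.sum_const, nsmul_eq_mul, mul_one]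
    exact le_mul_of_one_le_right (Nat.cast_nonneg _) hratio

lemma card_roots_toFinset_taylor {K : Type*} [Field K] (t : K) (P : K[X]) :
    (taylor t P).roots.toFinset.card = P.roots.toFinset.card := by
  rcases eq_or_ne P 0 with rfl | hP
  · rw [map_zero]
  have himage : (taylor t P).roots.toFinset = P.roots.toFinset.image (· - t) := by
    ext x
    simp only [Multiset.mem_toFinset, Finset.mem_image, mem_roots hP,
      mem_roots ((taylor_eq_zero t P).not.2 hP), IsRoot.def, taylor_eval]
    exact ⟨fun h ↦ ⟨x + t, h, add_sub_cancel_right x t⟩, by rintro ⟨y, h, rfl⟩; simpa using h⟩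
  rw [himage, Finset.card_image_of_injective _ sub_left_injective]

lemma polyIndexOver_taylor {K : Type*} [Field K] (t : K) (P : K[X]) :
    polyIndexOver K (taylor t P) = polyIndexOver K P := by
  rw [polyIndexOver, polyIndexOver, natDegree_taylor, map_taylor, card_roots_toFinset_taylor]

end FourierDecay

/-! ### The density of polynomials of large index -/

section Density

open UniqueFactorizationMonoid

variable {F : Type*} [Field F]

lemma prod_normalizedFactors_of_monic {f : F[X]} (hf : f.Monic) :
    (normalizedFactors f).prod = f := by
  rw [prod_normalizedFactors_eq hf.ne_zero, hf.normalize_eq_self]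

lemma card_normalizedFactors_le_natDegree {f : F[X]} (hf : f ≠ 0) :
    (normalizedFactors f).card ≤ f.natDegree := by
  have hfactor : ∀ d ∈ (normalizedFactors f).map natDegree, 1 ≤ d := by
    simp only [Multiset.mem_map, forall_exists_index, and_imp, forall_apply_eq_imp_iff₂]
    exact fun q hq ↦ (irreducible_of_normalized_factor q hq).natDegree_pos
  calc (normalizedFactors f).card ≤ ((normalizedFactors f).map natDegree).sum := by
        simpa using Multiset.card_nsmul_le_sum hfactor
    _ = f.natDegree := by
        rw [← natDegree_multiset_prod _ (zero_notMem_normalizedFactors f),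
          natDegree_eq_of_degree_eq (degree_eq_degree_of_associated (prod_normalizedFactors hf))]

lemma card_le_of_forall_monic_dvd {h : F[X]} (hh : h ≠ 0) {T : Finset F[X]}
    (hT : ∀ f ∈ T, f.Monic ∧ f ∣ h) : T.card ≤ 2 ^ h.natDegree := by
  have hinj : Set.InjOn normalizedFactors (T : Set F[X]) := fun f hf g hg hfg ↦ by
    rw [← prod_normalizedFactors_of_monic (hT f hf).1, hfg,
      prod_normalizedFactors_of_monic (hT g hg).1]
  have hsub : T.image normalizedFactors ⊆ (normalizedFactors h).powerset.toFinset := by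
    refine Finset.image_subset_iff.2 fun f hf ↦ ?_
    rw [Multiset.mem_toFinset, Multiset.mem_powerset]
    exact (dvd_iff_normalizedFactors_le_normalizedFactors (hT f hf).1.ne_zero hh).1 (hT f hf).2
  calc T.card = (T.image normalizedFactors).card := (Finset.card_image_of_injOn hinj).symm
    _ ≤ (normalizedFactors h).powerset.card :=
        (Finset.card_le_card hsub).trans (Multiset.toFinset_card_le _)
    _ ≤ 2 ^ h.natDegree := by
        rw [Multiset.card_powerset]
        exact Nat.pow_le_pow_right two_pos (card_normalizedFactors_le_natDegree hh)

lemma radical_monic (f : F[X]) : (radical f).Monic :=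
  monic_prod_of_monic _ _ fun q hq ↦ by
    have hq := mem_primeFactors.1 hq
    exact normalize_normalized_factor q hq ▸
      monic_normalize (irreducible_of_normalized_factor q hq).ne_zero

lemma dvd_radical_pow_natDegree {f : F[X]} (hf : f ≠ 0) : f ∣ radical f ^ f.natDegree := by
  rw [dvd_iff_normalizedFactors_le_normalizedFactors hf (pow_ne_zero _ radical_ne_zero),
    normalizedFactors_pow, Multiset.le_iff_count]
  intro q
  rw [Multiset.count_nsmul]
  by_cases hq : q ∈ normalizedFactors f
  · have hrad : q ∈ normalizedFactors (radical f) := by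
      rwa [← mem_primeFactors, primeFactors_radical, mem_primeFactors]
    calc (normalizedFactors f).count q ≤ f.natDegree :=
          (Multiset.count_le_card _ _).trans (card_normalizedFactors_le_natDegree hf)
      _ ≤ f.natDegree * (normalizedFactors (radical f)).count q :=
          Nat.le_mul_of_pos_right _ (Multiset.count_pos.2 hrad)
  · rw [Multiset.count_eq_zero_of_notMem hq]
    exact Nat.zero_le _

lemma natDegree_radical_add_polyIndexOver_le [PerfectField F] {f : F[X]} (hf : f ≠ 0) :
    (radical f).natDegree + polyIndexOver F f ≤ f.natDegree := by
  have hnodup : ((radical f).aroots (AlgebraicClosure F)).Nodup :=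
    nodup_roots ((separable_map _).2 (PerfectField.separable_iff_squarefree.2 squarefree_radical))
  have hsubset : (radical f).aroots (AlgebraicClosure F) ⊆ f.aroots (AlgebraicClosure F) :=
    fun x hx ↦ mem_aroots.2 ⟨hf, aeval_eq_zero_of_dvd_aeval_eq_zero radical_dvd_self
      (mem_aroots.1 hx).2⟩
  have hradical : (radical f).natDegree ≤ (f.aroots (AlgebraicClosure F)).toFinset.card := by
    rw [← card_aroots_eq_natDegree (Ω := AlgebraicClosure F),
      ← Multiset.toFinset_card_of_nodup hnodup]
    exact Finset.card_le_card (Multiset.toFinset_subset.2 hsubset)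
  have hroots : (f.aroots (AlgebraicClosure F)).toFinset.card ≤ f.natDegree :=
    (Multiset.toFinset_card_le _).trans_eq (card_aroots_eq_natDegree f)
  change _ + (f.natDegree - (f.aroots (AlgebraicClosure F)).toFinset.card) ≤ _
  lia

variable [Fintype F]

lemma card_biUnion_monicsOfDegree_le (n : ℕ) :
    ((Finset.range (n + 1)).biUnion (monicsOfDegree F)).card ≤ (n + 1) * Fintype.card F ^ n := by
  refine Finset.card_biUnion_le.trans ((Finset.sum_le_card_nsmul _ _ (Fintype.card F ^ n)
    fun d hd ↦ ?_).trans_eq (by rw [Finset.card_range, smul_eq_mul]))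
  rw [card_monicsOfDegree]
  exact Nat.pow_le_pow_right Fintype.card_pos (Nat.lt_succ_iff.1 (Finset.mem_range.1 hd))

lemma card_filter_radical_eq_le {n : ℕ} {g : F[X]} (hg : g ≠ 0) (hgn : g.natDegree ≤ n) :
    ({a : Fin n → F | radical (monicOfCoeffs a) = g} : Finset _).card ≤ 2 ^ (n * n) := by
  rw [← Finset.card_image_of_injective _ monicOfCoeffs_injective]
  refine (card_le_of_forall_monic_dvd (pow_ne_zero n hg) fun f hf ↦ ?_).trans ?_
  · obtain ⟨a, ha, rfl⟩ := Finset.mem_image.1 hf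
    have hdvd := dvd_radical_pow_natDegree (monicOfCoeffs_monic a).ne_zero
    rw [(Finset.mem_filter.1 ha).2, natDegree_monicOfCoeffs] at hdvd
    exact ⟨monicOfCoeffs_monic a, hdvd⟩
  · rw [natDegree_pow]
    gcongr
    exact one_le_two

-- The radical of a polynomial of index at least `k` has degree at most `n - k`, and each radical
-- comes from boundedly many polynomials.
lemma card_le_polyIndexOver_mul_pow_le (n k : ℕ) :
    ({a : Fin n → F | k ≤ polyIndexOver F (monicOfCoeffs a)} : Finset _).card *
      Fintype.card F ^ k ≤ 2 ^ (n * n) * (n + 1) * Fintype.card F ^ n := by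
  set S : Finset (Fin n → F) := {a | k ≤ polyIndexOver F (monicOfCoeffs a)}
  set q := Fintype.card F
  have hdegree : ∀ a ∈ S, (radical (monicOfCoeffs a)).natDegree + k ≤ n := fun a ha ↦ by
    have hadd := natDegree_radical_add_polyIndexOver_le (monicOfCoeffs_monic a).ne_zero
    rw [natDegree_monicOfCoeffs] at hadd
    exact (Nat.add_le_add_left (Finset.mem_filter.1 ha).2 _).trans hadd
  rcases lt_or_ge n k with hnk | hkn
  · have hempty : S = ∅ := Finset.eq_empty_of_forall_notMem fun a ha ↦
      ((Nat.le_add_left _ _).trans (hdegree a ha)).not_gt hnk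
    rw [hempty, Finset.card_empty, zero_mul]
    exact Nat.zero_le _
  have hmaps : ∀ a ∈ S, radical (monicOfCoeffs a) ∈
      (Finset.range (n - k + 1)).biUnion (monicsOfDegree F) := fun a ha ↦
    Finset.mem_biUnion.2 ⟨_, Finset.mem_range.2 (by have := hdegree a ha; lia),
      mem_monicsOfDegree.2 ⟨radical_monic _, rfl⟩⟩
  have hfiber : ∀ g ∈ (Finset.range (n - k + 1)).biUnion (monicsOfDegree F),
      (S.filter fun a ↦ radical (monicOfCoeffs a) = g).card ≤ 2 ^ (n * n) := fun g hg ↦ by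
    obtain ⟨d, hd, hg⟩ := Finset.mem_biUnion.1 hg
    obtain ⟨hm, rfl⟩ := mem_monicsOfDegree.1 hg
    refine (Finset.card_le_card (Finset.filter_subset_filter _ S.subset_univ)).trans
      (card_filter_radical_eq_le hm.ne_zero ?_)
    have := Finset.mem_range.1 hd
    lia
  calc S.card * q ^ k
      ≤ 2 ^ (n * n) * ((n - k + 1) * q ^ (n - k)) * q ^ k := by
        gcongr
        exact (Finset.card_le_mul_card_image_of_maps_to hmaps _ hfiber).trans
          (Nat.mul_le_mul_left _ (card_biUnion_monicsOfDegree_le _))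
    _ = 2 ^ (n * n) * (n - k + 1) * q ^ n := by
        rw [mul_assoc, mul_assoc, mul_assoc, ← pow_add, Nat.sub_add_cancel hkn]
    _ ≤ 2 ^ (n * n) * (n + 1) * q ^ n := by
        gcongr
        exact Nat.sub_le n k

end Density

/-! ### Fourier coefficients of sets given by congruence conditions -/

section ChineseRemainder

variable {ι σ : Type*} [Fintype ι] (q : ι → ℕ)
  (hq : Pairwise (Function.onFun Nat.Coprime q))

/-- The Chinese remainder theorem for vectors, whose `i`-th component is reduction modulo `q i`. -/
noncomputable def crtEquiv : (σ → ZMod (∏ i, q i)) ≃ (∀ i, σ → ZMod (q i)) :=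
  (Equiv.piCongrRight fun _ ↦ (ZMod.prodEquivPi q hq).toEquiv).trans (Equiv.piComm _)

lemma crtEquiv_apply (b : σ → ZMod (∏ i, q i)) (i : ι) (l : σ) :
    crtEquiv q hq b i l = ZMod.prodEquivPi q hq (b l) i := rfl

lemma crtEquiv_intCast (a : σ → ℤ) (i : ι) :
    crtEquiv q hq (fun l ↦ (a l : ZMod (∏ i, q i))) i = fun l ↦ (a l : ZMod (q i)) := by
  funext l
  rw [crtEquiv_apply, map_intCast, Pi.intCast_apply]

variable [NeZero (∏ i, q i)]

/-- The component at `i` of the standard additive character of `ZMod (∏ i, q i)` in its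
factorization along the Chinese remainder theorem. -/
noncomputable def crtChar (i : ι) : AddChar (ZMod (q i)) ℂ :=
  (ZMod.stdAddChar (N := ∏ i, q i)).compAddMonoidHom
    ((ZMod.prodEquivPi q hq).symm.toAddEquiv.toAddMonoidHom.comp
      (AddMonoidHom.single (fun i ↦ ZMod (q i)) i))

lemma crtChar_apply (i : ι) (y : ZMod (q i)) :
    crtChar q hq i y = ZMod.stdAddChar ((ZMod.prodEquivPi q hq).symm (Pi.single i y)) := rfl

lemma crtChar_ne_one (i : ι) [Nontrivial (ZMod (q i))] : crtChar q hq i ≠ 1 := by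
  intro h
  have hone : crtChar q hq i 1 = 1 := by rw [h, AddChar.one_apply]
  rw [crtChar_apply, ← AddChar.map_zero_eq_one (ZMod.stdAddChar (N := ∏ i, q i))] at hone
  have hsingle := (map_eq_zero_iff _ (RingEquiv.injective _)).1 (ZMod.injective_stdAddChar hone)
  exact one_ne_zero (Pi.single_eq_zero_iff.1 hsingle)

lemma addChar_map_sum {A M α : Type*} [AddCommMonoid A] [CommMonoid M] (ψ : AddChar A M)
    (s : Finset α) (f : α → A) : ψ (∑ x ∈ s, f x) = ∏ x ∈ s, ψ (f x) :=
  map_sum ψ.toAddMonoidHom f s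

lemma stdAddChar_eq_prod_crtChar (x : ZMod (∏ i, q i)) :
    ZMod.stdAddChar x = ∏ i, crtChar q hq i (ZMod.prodEquivPi q hq x i) := by
  simp only [crtChar_apply]
  rw [← addChar_map_sum, ← map_sum, Finset.univ_sum_single, RingEquiv.symm_apply_apply]

variable [Fintype σ] [DecidableEq σ]

lemma sum_stdAddChar_dotProduct_eq_prod (S : ∀ i, Finset (σ → ZMod (q i))) (h : σ → ℤ) :
    ∑ b : σ → ZMod (∏ i, q i) with ∀ i, crtEquiv q hq b i ∈ S i,
        ZMod.stdAddChar ((fun l ↦ (h l : ZMod (∏ i, q i))) ⬝ᵥ b) =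
      ∏ i, ∑ a ∈ S i, crtChar q hq i ((fun l ↦ (h l : ZMod (q i))) ⬝ᵥ a) := by
  rw [Finset.prod_univ_sum]
  refine Finset.sum_equiv (crtEquiv q hq) (fun b ↦ ?_) fun b _ ↦ ?_
  · rw [Finset.mem_filter_univ, Fintype.mem_piFinset]
  · rw [stdAddChar_eq_prod_crtChar q hq]
    refine Finset.prod_congr rfl fun i _ ↦ congrArg _ ?_
    simp only [dotProduct, crtEquiv_apply, map_sum, map_mul, map_intCast, Finset.sum_apply,
      Pi.mul_apply, Pi.intCast_apply]

lemma norm_sum_stdAddChar_dotProduct_le {S : ∀ i, Finset (σ → ZMod (q i))} {κ : ℝ} (hκ : 0 ≤ κ)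
    (hS : ∀ i, HasFourierDecay (S i) κ) (h : σ → ℤ) :
    ‖∑ b : σ → ZMod (∏ i, q i) with ∀ i, crtEquiv q hq b i ∈ S i,
        ZMod.stdAddChar ((fun l ↦ (h l : ZMod (∏ i, q i))) ⬝ᵥ b)‖ ≤
      (∏ i, ((S i).card : ℝ)) * ∏ i, (κ / √(q i) + if ∀ l, (q i : ℤ) ∣ h l then 1 else 0) := by
  rw [sum_stdAddChar_dotProduct_eq_prod, norm_prod, ← Finset.prod_mul_distrib]
  refine Finset.prod_le_prod (fun _ _ ↦ norm_nonneg _) fun i _ ↦ ?_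
  split_ifs with hdvd
  · have : NeZero (q i) :=
      ⟨Finset.prod_ne_zero_iff.1 (NeZero.ne (∏ i, q i)) i (Finset.mem_univ i)⟩
    refine (norm_sum_le _ _).trans ?_
    simp only [AddChar.norm_apply, Finset.sum_const, nsmul_eq_mul, mul_one]
    exact le_mul_of_one_le_right (Nat.cast_nonneg _) (le_add_of_nonneg_left (by positivity))
  · have hne : (fun l ↦ (h l : ZMod (q i))) ≠ 0 := fun h0 ↦
      hdvd fun l ↦ (ZMod.intCast_zmod_eq_zero_iff_dvd _ _).1 (congrFun h0 l)
    obtain ⟨l, hl⟩ := Function.ne_iff.1 hne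
    have : Nontrivial (ZMod (q i)) := nontrivial_of_ne _ _ hl
    rw [add_zero]
    exact hS i _ (crtChar_ne_one q hq i) _ hne

end ChineseRemainder

/-! ### Counting pairs of congruent integers -/

section CongruentPairs

lemma card_Ico_filter_modEq_le (a v : ℤ) (L : ℕ) {r : ℕ} (hr : 0 < r) :
    (({x ∈ Finset.Ico a (a + L) | x ≡ v [ZMOD r]} : Finset ℤ).card : ℝ) ≤ L / r + 1 := by
  have hceil : (({x ∈ Finset.Ico a (a + L) | x ≡ v [ZMOD r]} : Finset ℤ).card : ℤ) ≤
      ⌈(L : ℚ) / r⌉ := by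
    rw [Int.Ico_filter_modEq_card a (a + L) (Int.natCast_pos.2 hr)]
    refine max_le (sub_le_iff_le_add'.2 ?_) (Int.ceil_nonneg (by positivity))
    have hsplit : ((a + L : ℤ) - v : ℚ) / (r : ℤ) = (a - v) / (r : ℤ) + L / r := by
      push_cast
      ring
    rw [hsplit]
    exact Int.ceil_add_le _ _
  have hlt : ((({x ∈ Finset.Ico a (a + L) | x ≡ v [ZMOD r]} : Finset ℤ).card : ℤ) : ℚ) ≤
      L / r + 1 := (Int.cast_le.2 hceil).trans (Int.ceil_lt_add_one _).le
  have hreal := (Rat.cast_le (K := ℝ)).2 hlt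
  push_cast at hreal
  exact hreal

lemma card_filter_dvd_sub_le (J : ℕ) {P : ℕ} (hP : 0 < P) :
    (({x ∈ Finset.range J ×ˢ Finset.range J | (P : ℤ) ∣ (x.1 : ℤ) - x.2} : Finset _).card : ℝ) ≤
      J * (J / P + 1) := by
  have hfiber (y : ℕ) :
      (({x ∈ Finset.range J | (P : ℤ) ∣ (y : ℤ) - (x : ℕ)} : Finset ℕ).card : ℝ) ≤ J / P + 1 := by
    refine le_trans (Nat.cast_le.2 (Finset.card_le_card_of_injOn (fun x ↦ (x : ℤ)) (fun x hx ↦ ?_)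
      Nat.cast_injective.injOn)) (card_Ico_filter_modEq_le 0 y J hP)
    obtain ⟨hxJ, hdvd⟩ := Finset.mem_filter.1 hx
    exact Finset.mem_coe.2 (Finset.mem_filter.2 ⟨Finset.mem_Ico.2
      ⟨Nat.cast_nonneg x, by rw [zero_add]; exact Nat.cast_lt.2 (Finset.mem_range.1 hxJ)⟩,
      Int.modEq_iff_dvd.2 hdvd⟩)
  rw [Finset.card_filter, Finset.sum_product]
  simp only [← Finset.card_filter]
  rw [Nat.cast_sum]
  refine (Finset.sum_le_card_nsmul _ _ _ fun y _ ↦ hfiber y).trans_eq ?_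
  rw [Finset.card_range, nsmul_eq_mul]

variable {ι : Type*} {q : ι → ℕ}

lemma sum_prod_indicator_dvd_sub_le (hq : Pairwise (Function.onFun Nat.Coprime q))
    (hpos : ∀ i, 0 < q i) (n J : ℕ) (t : Finset ι) :
    ∑ x ∈ Fintype.piFinset fun _ : Fin n ↦ Finset.range J ×ˢ Finset.range J,
        ∏ i ∈ t, (if ∀ l, (q i : ℤ) ∣ ((x l).1 : ℤ) - (x l).2 then (1 : ℝ) else 0) ≤
      (J * (J / ∏ i ∈ t, (q i : ℝ) + 1)) ^ n := by
  set P := ∏ i ∈ t, q i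
  set T : Finset (ℕ × ℕ) :=
    {x ∈ Finset.range J ×ˢ Finset.range J | (P : ℤ) ∣ (x.1 : ℤ) - x.2}
  have hdvd {z : ℤ} (hz : ∀ i ∈ t, (q i : ℤ) ∣ z) : (P : ℤ) ∣ z := by
    rw [Nat.cast_prod]
    exact Finset.prod_dvd_of_coprime
      (fun i _ j _ hij ↦ Nat.isCoprime_iff_coprime.2 (hq hij)) hz
  have hfilter : ({x ∈ Fintype.piFinset fun _ : Fin n ↦ Finset.range J ×ˢ Finset.range J |
      ∀ i ∈ t, ∀ l, (q i : ℤ) ∣ ((x l).1 : ℤ) - (x l).2} : Finset _) ⊆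
        Fintype.piFinset fun _ ↦ T := fun x hx ↦ by
    obtain ⟨hrange, hx⟩ := Finset.mem_filter.1 hx
    exact Fintype.mem_piFinset.2 fun l ↦ Finset.mem_filter.2
      ⟨Fintype.mem_piFinset.1 hrange l, hdvd fun i hi ↦ hx i hi l⟩
  simp only [Finset.prod_ite_zero, Finset.prod_const_one]
  rw [Finset.sum_boole, ← Nat.cast_prod]
  calc _ ≤ ((Fintype.piFinset fun _ : Fin n ↦ T).card : ℝ) :=
        Nat.cast_le.2 (Finset.card_le_card hfilter)
    _ = (T.card : ℝ) ^ n := by rw [Fintype.card_piFinset_const, Nat.cast_pow]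
    _ ≤ _ := pow_le_pow_left₀ (Nat.cast_nonneg _)
        (card_filter_dvd_sub_le J (Finset.prod_pos fun i _ ↦ hpos i)) n

lemma mul_div_add_one_pow_le {n : ℕ} (hn : n ≠ 0) {J P Q : ℝ} (hJ : 0 ≤ J) (hP : 1 ≤ P)
    (hQ : 1 ≤ Q) (hJPQ : J ^ (2 * n) ≤ Q * P) : (J * (J / P + 1)) ^ n ≤ 2 ^ n * J ^ n * √Q := by
  have hratio : (J / P) ^ n ≤ √Q := by
    apply Real.le_sqrt_of_sq_le
    rw [div_pow, div_pow, div_le_iff₀ (by positivity), ← pow_mul, ← pow_mul, mul_comm n 2]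
    exact hJPQ.trans (mul_le_mul_of_nonneg_left (le_self_pow₀ hP (by lia)) (by positivity))
  calc (J * (J / P + 1)) ^ n = J ^ n * (J / P + 1) ^ n := mul_pow _ _ _
    _ ≤ J ^ n * (2 ^ (n - 1) * ((J / P) ^ n + 1 ^ n)) := by
        gcongr
        exact add_pow_le (by positivity) zero_le_one n
    _ ≤ J ^ n * (2 ^ (n - 1) * (√Q + √Q)) := by
        rw [one_pow]
        gcongr
        exact Real.one_le_sqrt.2 hQ
    _ = 2 ^ (n - 1 + 1) * J ^ n * √Q := by ring
    _ = 2 ^ n * J ^ n * √Q := by rw [Nat.sub_add_cancel (Nat.one_le_iff_ne_zero.2 hn)]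

lemma sum_prod_decay_add_indicator_le [Fintype ι]
    (hq : Pairwise (Function.onFun Nat.Coprime q)) (hpos : ∀ i, 0 < q i) {κ : ℝ} (hκ : 1 ≤ κ)
    {n J : ℕ} (hn : n ≠ 0) (hJ : (J : ℝ) ^ (2 * n) ≤ ∏ i, (q i : ℝ)) :
    ∑ x ∈ Fintype.piFinset fun _ : Fin n ↦ Finset.range J ×ˢ Finset.range J,
        ∏ i, (κ / √(q i) + if ∀ l, (q i : ℤ) ∣ ((x l).1 : ℤ) - (x l).2 then 1 else 0) ≤
      (2 * κ) ^ Fintype.card ι * (2 ^ n * J ^ n) := by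
  have hone (t : Finset ι) : 1 ≤ ∏ i ∈ t, (q i : ℝ) := by
    exact_mod_cast Nat.succ_le_of_lt (Finset.prod_pos fun i _ ↦ hpos i)
  have hterm (t : Finset ι) :
      ∑ x ∈ Fintype.piFinset fun _ : Fin n ↦ Finset.range J ×ˢ Finset.range J,
          (∏ i ∈ t, κ / √(q i)) * ∏ i ∈ tᶜ,
            (if ∀ l, (q i : ℤ) ∣ ((x l).1 : ℤ) - (x l).2 then (1 : ℝ) else 0) ≤
        κ ^ Fintype.card ι * (2 ^ n * J ^ n) := by
    have hsqrt : 0 < √(∏ i ∈ t, (q i : ℝ)) := Real.sqrt_pos.2 (one_pos.trans_le (hone t))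
    have hdecay : ∏ i ∈ t, κ / √(q i) ≤ κ ^ Fintype.card ι / √(∏ i ∈ t, (q i : ℝ)) := by
      rw [Finset.prod_div_distrib, Finset.prod_const, Real.sqrt_prod _ fun _ _ ↦ by positivity]
      gcongr
      exact t.card_le_univ
    rw [← Finset.mul_sum]
    calc _ ≤ κ ^ Fintype.card ι / √(∏ i ∈ t, (q i : ℝ)) *
          (2 ^ n * J ^ n * √(∏ i ∈ t, (q i : ℝ))) := by
          refine mul_le_mul hdecay ((sum_prod_indicator_dvd_sub_le hq hpos n J tᶜ).trans
            (mul_div_add_one_pow_le hn (Nat.cast_nonneg J) (hone tᶜ) (hone t) ?_))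
            (Finset.sum_nonneg fun _ _ ↦ Finset.prod_nonneg fun _ _ ↦ by positivity)
            (by positivity)
          rwa [Finset.prod_mul_prod_compl]
      _ = κ ^ Fintype.card ι * (2 ^ n * J ^ n) := by field_simp
  simp only [Fintype.prod_add]
  rw [Finset.sum_comm]
  refine (Finset.sum_le_card_nsmul _ _ _ fun t _ ↦ hterm t).trans_eq ?_
  rw [Finset.card_univ, Fintype.card_finset, nsmul_eq_mul, Nat.cast_pow, Nat.cast_ofNat, mul_pow,
    mul_assoc]

end CongruentPairs

/-! ### Counting lattice points in a box with the Fejér kernel -/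

section Fejer

variable {N : ℕ} [NeZero N]

/-- `J` times the Fejér kernel of order `J` on `ZMod N`. -/
noncomputable def fejerKernel (J : ℕ) (x : ZMod N) : ℝ :=
  ‖∑ j ∈ Finset.range J, ZMod.stdAddChar ((j : ZMod N) * x)‖ ^ 2

lemma fejerKernel_nonneg (J : ℕ) (x : ZMod N) : 0 ≤ fejerKernel J x := sq_nonneg _

lemma fejerKernel_eq_sum (J : ℕ) (x : ZMod N) :
    (fejerKernel J x : ℂ) = ∑ q ∈ Finset.range J ×ˢ Finset.range J,
      ZMod.stdAddChar ((((q.1 : ℤ) - q.2 : ℤ) : ZMod N) * x) := by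
  rw [fejerKernel, Complex.ofReal_pow, ← Complex.mul_conj', map_sum, Finset.sum_mul_sum,
    Finset.sum_product]
  refine Finset.sum_congr rfl fun j _ ↦ Finset.sum_congr rfl fun k _ ↦ ?_
  rw [← AddChar.map_neg_eq_conj, ← AddChar.map_add_eq_mul]
  push_cast
  rw [sub_mul, sub_eq_add_neg]

lemma one_half_le_re_stdAddChar_intCast {x : ℤ} (hx : 8 * |(x : ℝ)| ≤ N) :
    1 / 2 ≤ (ZMod.stdAddChar (x : ZMod N)).re := by
  have hN : (0 : ℝ) < N := Nat.cast_pos.2 (NeZero.pos N)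
  set θ : ℝ := 2 * Real.pi * x / N
  have hexp : 2 * (Real.pi : ℂ) * Complex.I * x / N = (θ : ℂ) * Complex.I := by
    simp only [θ]
    push_cast
    ring
  have hθ : |θ| ≤ 1 := by
    rw [abs_div, abs_of_pos hN, div_le_one hN, abs_mul, abs_of_pos Real.two_pi_pos]
    nlinarith [Real.pi_lt_four, abs_nonneg (x : ℝ)]
  rw [ZMod.stdAddChar_coe, hexp, Complex.exp_ofReal_mul_I_re]
  linarith [Real.one_sub_sq_div_two_le_cos (x := θ), (sq_le_one_iff_abs_le_one θ).2 hθ]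

lemma sq_div_four_le_fejerKernel {J : ℕ} {x : ℤ} (hx : 8 * ((J - 1 : ℝ) * |(x : ℝ)|) ≤ N) :
    (J : ℝ) ^ 2 / 4 ≤ fejerKernel J (x : ZMod N) := by
  have hre : (J : ℝ) / 2 ≤
      (∑ j ∈ Finset.range J, ZMod.stdAddChar ((j : ZMod N) * (x : ZMod N))).re := by
    have hterm : ∀ j ∈ Finset.range J,
        1 / 2 ≤ (ZMod.stdAddChar ((j : ZMod N) * (x : ZMod N))).re := fun j hj ↦ by
      have hjJ : (j : ℝ) ≤ J - 1 := by
        rw [le_sub_iff_add_le]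
        exact_mod_cast Finset.mem_range.1 hj
      have hjx : ((j : ZMod N) * (x : ZMod N)) = ((j * x : ℤ) : ZMod N) := by push_cast; rfl
      rw [hjx]
      refine one_half_le_re_stdAddChar_intCast (le_trans ?_ hx)
      rw [Int.cast_mul, Int.cast_natCast, abs_mul, Nat.abs_cast]
      gcongr
    rw [Complex.re_sum]
    simpa [div_eq_mul_inv] using Finset.card_nsmul_le_sum _ _ _ hterm
  calc (J : ℝ) ^ 2 / 4 = (J / 2) ^ 2 := by ring
    _ ≤ fejerKernel J (x : ZMod N) := by
        unfold fejerKernel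
        gcongr
        exact hre.trans (Complex.re_le_norm _)

lemma sum_prod_fejerKernel_le {n : ℕ} (W : Finset (Fin n → ZMod N)) (J : ℕ) :
    ∑ b ∈ W, ∏ l, fejerKernel J (b l) ≤
      ∑ q ∈ Fintype.piFinset fun _ : Fin n ↦ Finset.range J ×ˢ Finset.range J,
        ‖∑ b ∈ W, ZMod.stdAddChar
          ((fun l ↦ ((((q l).1 : ℤ) - (q l).2 : ℤ) : ZMod N)) ⬝ᵥ b)‖ := by
  have hexpand : ((∑ b ∈ W, ∏ l, fejerKernel J (b l) : ℝ) : ℂ) =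
      ∑ q ∈ Fintype.piFinset fun _ : Fin n ↦ Finset.range J ×ˢ Finset.range J,
        ∑ b ∈ W, ZMod.stdAddChar
          ((fun l ↦ ((((q l).1 : ℤ) - (q l).2 : ℤ) : ZMod N)) ⬝ᵥ b) := by
    rw [Finset.sum_comm, Complex.ofReal_sum]
    refine Finset.sum_congr rfl fun b _ ↦ ?_
    simp only [Complex.ofReal_prod, fejerKernel_eq_sum, Finset.prod_univ_sum, dotProduct,
      addChar_map_sum]
  have hnonneg : 0 ≤ ∑ b ∈ W, ∏ l, fejerKernel J (b l) :=
    Finset.sum_nonneg fun _ _ ↦ Finset.prod_nonneg fun _ _ ↦ fejerKernel_nonneg _ _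
  rw [← Real.norm_of_nonneg hnonneg, ← Complex.norm_real, hexpand]
  exact norm_sum_le _ _

variable {n : ℕ} {A : Finset (Fin n → ℤ)} {H : ℝ}

lemma card_filter_intCast_eq_le (hH : 1 ≤ H) (hA : ∀ a ∈ A, ∀ l, |(a l : ℝ)| ≤ H)
    (b : Fin n → ZMod N) :
    (({a ∈ A | (fun l ↦ (a l : ZMod N)) = b} : Finset _).card : ℝ) ≤ (3 * H / N + 1) ^ n := by
  set F : ℕ := ⌊H⌋₊
  have hF : (F : ℝ) ≤ H := Nat.floor_le (zero_le_one.trans hH)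
  set B : Fin n → Finset ℤ := fun l ↦
    {x ∈ Finset.Ico (-(F : ℤ)) (-(F : ℤ) + (2 * F + 1 : ℕ)) | x ≡ ((b l).val : ℤ) [ZMOD N]}
  have hsubset : ({a ∈ A | (fun l ↦ (a l : ZMod N)) = b} : Finset _) ⊆ Fintype.piFinset B := by
    intro a ha
    obtain ⟨haA, hab⟩ := Finset.mem_filter.1 ha
    refine Fintype.mem_piFinset.2 fun l ↦ Finset.mem_filter.2 ⟨Finset.mem_Ico.2 ?_, ?_⟩
    · have hnatAbs : (a l).natAbs ≤ F := Nat.le_floor (by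
        rw [Nat.cast_natAbs, Int.cast_abs]
        exact hA a haA l)
      lia
    · rw [← ZMod.intCast_eq_intCast_iff, congrFun hab l, Int.cast_natCast, ZMod.natCast_zmod_val]
  calc _ ≤ ((Fintype.piFinset B).card : ℝ) := Nat.cast_le.2 (Finset.card_le_card hsubset)
    _ = ∏ l, ((B l).card : ℝ) := by rw [Fintype.card_piFinset, Nat.cast_prod]
    _ ≤ ∏ _l : Fin n, (3 * H / N + 1) := by
        refine Finset.prod_le_prod (fun _ _ ↦ Nat.cast_nonneg _) fun l _ ↦ ?_
        refine (card_Ico_filter_modEq_le _ _ _ (NeZero.pos N)).trans ?_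
        gcongr
        push_cast
        linarith
    _ = (3 * H / N + 1) ^ n := by rw [Finset.prod_const, Finset.card_univ, Fintype.card_fin]

lemma card_mul_sq_div_four_pow_le (hH : 1 ≤ H) {J : ℕ} (hJ : 8 * ((J - 1 : ℝ) * H) ≤ N)
    (hJ1 : 1 ≤ J) (hA : ∀ a ∈ A, ∀ l, |(a l : ℝ)| ≤ H) {W : Finset (Fin n → ZMod N)}
    (hAW : ∀ a ∈ A, (fun l ↦ (a l : ZMod N)) ∈ W) :
    (A.card : ℝ) * ((J : ℝ) ^ 2 / 4) ^ n ≤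
      (3 * H / N + 1) ^ n * ∑ b ∈ W, ∏ l, fejerKernel J (b l) := by
  have hJ0 : (0 : ℝ) ≤ J - 1 := sub_nonneg.2 (Nat.one_le_cast.2 hJ1)
  calc (A.card : ℝ) * ((J : ℝ) ^ 2 / 4) ^ n = ∑ a ∈ A, ∏ _l : Fin n, ((J : ℝ) ^ 2 / 4) := by
        simp only [Finset.prod_const, Finset.sum_const, Finset.card_univ, Fintype.card_fin,
          nsmul_eq_mul]
    _ ≤ ∑ a ∈ A, ∏ l, fejerKernel J (a l : ZMod N) := by
        refine Finset.sum_le_sum fun a ha ↦ Finset.prod_le_prod (fun _ _ ↦ by positivity)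
          fun l _ ↦ sq_div_four_le_fejerKernel (le_trans ?_ hJ)
        gcongr
        exact hA a ha l
    _ = ∑ b ∈ W, ∑ a ∈ A with (fun l ↦ (a l : ZMod N)) = b,
          ∏ l, fejerKernel J (a l : ZMod N) := (Finset.sum_fiberwise_of_maps_to hAW _).symm
    _ = ∑ b ∈ W, (({a ∈ A | (fun l ↦ (a l : ZMod N)) = b} : Finset _).card : ℝ) *
          ∏ l, fejerKernel J (b l) := by
        refine Finset.sum_congr rfl fun b _ ↦ ?_
        rw [← nsmul_eq_mul, ← Finset.sum_const]
        exact Finset.sum_congr rfl fun a ha ↦ by rw [← (Finset.mem_filter.1 ha).2]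
    _ ≤ (3 * H / N + 1) ^ n * ∑ b ∈ W, ∏ l, fejerKernel J (b l) := by
        rw [Finset.mul_sum]
        exact Finset.sum_le_sum fun b _ ↦ mul_le_mul_of_nonneg_right
          (card_filter_intCast_eq_le hH hA b)
          (Finset.prod_nonneg fun _ _ ↦ fejerKernel_nonneg _ _)

-- The largest kernel that is still bounded below on `[-H, H]` has order about `N / (8 * H)`.
lemma exists_fejerKernel_order {n : ℕ} {H N : ℝ} (hH : 1 ≤ H) (hN : 1 ≤ N)
    (hNH : N ^ (2 * n - 1) ≤ H ^ (2 * n)) :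
    ∃ J : ℕ, 1 ≤ J ∧ 8 * ((J - 1 : ℝ) * H) ≤ N ∧ N ≤ 8 * H * J ∧ (J : ℝ) ^ (2 * n) ≤ N := by
  set x := N / (8 * H)
  have hH0 : 0 < 8 * H := by positivity
  have hx0 : 0 ≤ x := by positivity
  have hxN : x * (8 * H) = N := div_mul_cancel₀ _ hH0.ne'
  refine ⟨⌊x⌋₊ + 1, Nat.le_add_left _ _, ?_, ?_, ?_⟩
  · push_cast
    nlinarith [Nat.floor_le hx0]
  · push_cast
    nlinarith [Nat.lt_floor_add_one x]
  rcases Nat.eq_zero_or_pos ⌊x⌋₊ with h0 | h1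
  · simpa [h0] using hN
  rcases Nat.eq_zero_or_pos n with rfl | hn
  · simpa using hN
  have hJH : ((⌊x⌋₊ + 1 : ℕ) : ℝ) * H ≤ N := by
    have hfloor : (1 : ℝ) ≤ ⌊x⌋₊ := Nat.one_le_cast.2 h1
    push_cast
    nlinarith [Nat.floor_le hx0]
  refine le_of_mul_le_mul_right ?_ (pow_pos (zero_lt_one.trans_le hH) (2 * n))
  calc ((⌊x⌋₊ + 1 : ℕ) : ℝ) ^ (2 * n) * H ^ (2 * n) = (((⌊x⌋₊ + 1 : ℕ) : ℝ) * H) ^ (2 * n) :=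
        (mul_pow _ _ _).symm
    _ ≤ N ^ (2 * n) := by gcongr
    _ = N * N ^ (2 * n - 1) := by rw [← pow_succ', Nat.sub_add_cancel (by lia)]
    _ ≤ N * H ^ (2 * n) := by gcongr

lemma mul_pow_le_of_mul_sq_div_four_pow_le {n : ℕ} {H N J a s : ℝ} (hH : 1 ≤ H) (hN : 1 ≤ N)
    (hJ : 1 ≤ J) (hs : 0 ≤ s) (hNJ : N ≤ 8 * H * J)
    (h : a * (J ^ 2 / 4) ^ n ≤ (3 * H / N + 1) ^ n * (s * (2 ^ n * J ^ n))) :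
    a * N ^ n ≤ 88 ^ n * H ^ n * s := by
  have hlength : (3 * H / N + 1) * N ≤ 11 * H * J := by
    have hexpand : (3 * H / N + 1) * N = 3 * H + N := by field_simp
    nlinarith
  refine le_of_mul_le_mul_right ?_ (show 0 < J ^ (2 * n) by positivity)
  calc a * N ^ n * J ^ (2 * n) = a * (J ^ 2 / 4) ^ n * (4 ^ n * N ^ n) := by
        rw [div_pow, ← pow_mul]
        field_simp
    _ ≤ (3 * H / N + 1) ^ n * (s * (2 ^ n * J ^ n)) * (4 ^ n * N ^ n) := by gcongr
    _ = ((3 * H / N + 1) * N) ^ n * (s * ((2 * 4) ^ n * J ^ n)) := by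
        rw [mul_pow (3 * H / N + 1) N, mul_pow 2 4]
        ring
    _ ≤ (11 * H * J) ^ n * (s * ((2 * 4) ^ n * J ^ n)) := by gcongr
    _ = 11 ^ n * (2 * 4) ^ n * H ^ n * s * J ^ (2 * n) := by
        rw [two_mul n, pow_add, mul_pow (11 * H), mul_pow 11]
        ring
    _ = 88 ^ n * H ^ n * s * J ^ (2 * n) := by
        rw [← mul_pow]
        norm_num

variable {ι : Type*} [Fintype ι] {q : ι → ℕ}

lemma sum_prod_fejerKernel_le_of_hasFourierDecay (hq : Pairwise (Function.onFun Nat.Coprime q))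
    [NeZero (∏ i, q i)] (hn : n ≠ 0) {κ : ℝ} (hκ : 1 ≤ κ) {S : ∀ i, Finset (Fin n → ZMod (q i))}
    (hS : ∀ i, HasFourierDecay (S i) κ) {J : ℕ} (hJ : (J : ℝ) ^ (2 * n) ≤ ∏ i, (q i : ℝ)) :
    ∑ b : Fin n → ZMod (∏ i, q i) with ∀ i, crtEquiv q hq b i ∈ S i,
        ∏ l, fejerKernel J (b l) ≤
      (∏ i, ((S i).card : ℝ)) * ((2 * κ) ^ Fintype.card ι * (2 ^ n * J ^ n)) := by
  have hpos (i : ι) : 0 < q i :=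
    Nat.pos_of_ne_zero (Finset.prod_ne_zero_iff.1 (NeZero.ne (∏ i, q i)) i (Finset.mem_univ i))
  refine (sum_prod_fejerKernel_le _ J).trans ((Finset.sum_le_sum fun x _ ↦
    norm_sum_stdAddChar_dotProduct_le q hq (zero_le_one.trans hκ) hS
      fun l ↦ ((x l).1 : ℤ) - (x l).2).trans ?_)
  rw [← Finset.mul_sum]
  refine mul_le_mul_of_nonneg_left (le_of_eq_of_le ?_
    (sum_prod_decay_add_indicator_le hq hpos hκ hn hJ))
    (Finset.prod_nonneg fun _ _ ↦ Nat.cast_nonneg _)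
  congr!

lemma card_mul_prod_pow_le_of_hasFourierDecay (hq : Pairwise (Function.onFun Nat.Coprime q))
    (hpos : ∀ i, 0 < q i) (hn : n ≠ 0) {κ : ℝ} (hκ : 1 ≤ κ)
    {S : ∀ i, Finset (Fin n → ZMod (q i))} (hS : ∀ i, HasFourierDecay (S i) κ)
    (hH : 1 ≤ H) (hqH : (∏ i, (q i : ℝ)) ^ (2 * n - 1) ≤ H ^ (2 * n))
    (hA : ∀ a ∈ A, ∀ l, |(a l : ℝ)| ≤ H)
    (hAS : ∀ a ∈ A, ∀ i, (fun l ↦ (a l : ZMod (q i))) ∈ S i) :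
    A.card * (∏ i, (q i : ℝ)) ^ n ≤
      88 ^ n * H ^ n * ((∏ i, ((S i).card : ℝ)) * (2 * κ) ^ Fintype.card ι) := by
  have hprod : 0 < ∏ i, q i := Finset.prod_pos fun i _ ↦ hpos i
  have : NeZero (∏ i, q i) := ⟨hprod.ne'⟩
  have hcast : ∏ i, (q i : ℝ) = (∏ i, q i : ℕ) := (Nat.cast_prod _ _).symm
  have hone : (1 : ℝ) ≤ (∏ i, q i : ℕ) := Nat.one_le_cast.2 hprod
  rw [hcast] at hqH ⊢
  obtain ⟨J, hJ1, hJH, hJN, hJpow⟩ := exists_fejerKernel_order hH hone hqH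
  have hAW : ∀ a ∈ A, (fun l ↦ (a l : ZMod (∏ i, q i))) ∈
      ({b | ∀ i, crtEquiv q hq b i ∈ S i} : Finset (Fin n → ZMod (∏ i, q i))) := fun a ha ↦
    Finset.mem_filter.2 ⟨Finset.mem_univ _, fun i ↦ (crtEquiv_intCast q hq a i).symm ▸ hAS a ha i⟩
  have hcount := (card_mul_sq_div_four_pow_le hH hJH hJ1 hA hAW).trans
    (mul_le_mul_of_nonneg_left
      (sum_prod_fejerKernel_le_of_hasFourierDecay hq hn hκ hS (hJpow.trans_eq hcast.symm))
      (by positivity))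
  rw [← mul_assoc (∏ i, ((S i).card : ℝ))] at hcount
  exact mul_pow_le_of_mul_sq_div_four_pow_le hH hone (Nat.one_le_cast.2 hJ1) (by positivity)
    hJN hcount

end Fejer

/-! ### Polynomials of large index modulo several primes -/

section LargeIndex

lemma finite_setOf_forall_abs_le {ι : Type*} [Finite ι] (H : ℝ) :
    {a : ι → ℤ | ∀ i, |(a i : ℝ)| ≤ H}.Finite := by
  refine (Set.Finite.pi' fun _ ↦ Set.finite_Icc (-⌊H⌋) ⌊H⌋).subset fun a ha i ↦ abs_le.1 ?_
  rw [Int.le_floor, Int.cast_abs]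
  exact ha i

lemma hasFourierDecay_le_polyIndexOver {p : ℕ} [Fact p.Prime] (n k : ℕ) :
    HasFourierDecay {a : Fin n → ZMod p | k ≤ polyIndexOver (ZMod p) (monicOfCoeffs a)} n := by
  convert hasFourierDecay_of_taylor_invariant (p := p) (n := n)
    (Q := fun P ↦ k ≤ polyIndexOver (ZMod p) P) fun t P ↦ by rw [polyIndexOver_taylor]

lemma prod_card_le_polyIndexOver_mul_prod_pow_le {ι : Type*} [Fintype ι] {p : ι → ℕ}
    [∀ i, Fact (p i).Prime] (n : ℕ) (k : ι → ℕ) :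
    (∏ i, (({a : Fin n → ZMod (p i) | k i ≤ polyIndexOver (ZMod (p i)) (monicOfCoeffs a)} :
        Finset _).card : ℝ)) * ∏ i, (p i : ℝ) ^ k i ≤
      (2 ^ (n * n) * (n + 1)) ^ Fintype.card ι * (∏ i, (p i : ℝ)) ^ n := by
  rw [← Finset.prod_mul_distrib, ← Finset.prod_pow, ← Finset.card_univ, ← Finset.prod_const,
    ← Finset.prod_mul_distrib]
  refine Finset.prod_le_prod (fun _ _ ↦ by positivity) fun i _ ↦ ?_
  have hdensity := card_le_polyIndexOver_mul_pow_le (F := ZMod (p i)) n (k i)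
  rw [ZMod.card] at hdensity
  exact_mod_cast hdensity

lemma pow_le_of_lt_rpow {n : ℕ} (hn : 1 ≤ n) {δ H N : ℝ} (hδ : δ < 1 / (2 * (n : ℝ) - 1))
    (hH : 1 ≤ H) (hN : 0 ≤ N) (hNH : N < H ^ (1 + δ)) : N ^ (2 * n - 1) ≤ H ^ (2 * n) := by
  have hn1 : (1 : ℝ) ≤ n := Nat.one_le_cast.2 hn
  have hexponent : ((2 * n - 1 : ℕ) : ℝ) = 2 * (n : ℝ) - 1 := by
    rw [Nat.cast_sub (by lia)]
    push_cast
    ring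
  calc N ^ (2 * n - 1) ≤ (H ^ (1 + δ)) ^ (2 * n - 1) := by gcongr
    _ = H ^ ((1 + δ) * (2 * (n : ℝ) - 1)) := by
        rw [← Real.rpow_natCast, ← Real.rpow_mul (by linarith), hexponent]
    _ ≤ H ^ ((2 * n : ℕ) : ℝ) := by
        refine Real.rpow_le_rpow_of_exponent_le hH ?_
        rw [lt_div_iff₀ (by linarith)] at hδ
        push_cast
        linarith
    _ = H ^ (2 * n) := Real.rpow_natCast _ _

end LargeIndex

theorem index_ge_k_count_small_conductor_general (n : ℕ) (hn : 1 ≤ n) :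
    ∃ c C : ℝ, 0 < c ∧ 0 < C ∧
      ∀ (m : ℕ) (p : Fin m → ℕ) (hp : ∀ i, (p i).Prime), Function.Injective p →
        ∀ (k : Fin m → ℕ) (H : ℝ), 0 ≤ H → (∏ i, (p i : ℝ)) ^ (2 * n - 1) ≤ H ^ (2 * n) →
        (Set.ncard {a : Fin n → ℤ | (∀ i, |(a i : ℝ)| ≤ H) ∧
            ∀ i, k i ≤ indexModP (p i) (hp i) n a} : ℝ)
          ≤ C * c ^ m * H ^ n / (∏ i, (p i : ℝ) ^ k i) := by
  refine ⟨2 * n * (2 ^ (n * n) * (n + 1)), 88 ^ n, by positivity, by positivity, ?_⟩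
  intro m p hp hinj k H hH hpH
  have (i : Fin m) : Fact (p i).Prime := ⟨hp i⟩
  have hprod : 1 ≤ ∏ i, (p i : ℝ) := by
    exact_mod_cast Nat.succ_le_of_lt (Finset.prod_pos fun i _ ↦ (hp i).pos)
  have hH1 : 1 ≤ H := (one_le_pow_iff_of_nonneg hH (by lia)).1 ((one_le_pow₀ hprod).trans hpH)
  have hcoprime : Pairwise (Function.onFun Nat.Coprime p) := fun i j hij ↦
    (Nat.coprime_primes (hp i) (hp j)).2 (hinj.ne hij)
  have hfinite : {a : Fin n → ℤ | (∀ i, |(a i : ℝ)| ≤ H) ∧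
      ∀ i, k i ≤ indexModP (p i) (hp i) n a}.Finite :=
    (finite_setOf_forall_abs_le H).subset fun a ha ↦ ha.1
  have hcount := card_mul_prod_pow_le_of_hasFourierDecay hcoprime (fun i ↦ (hp i).pos) (by lia)
    (Nat.one_le_cast.2 hn) (fun i ↦ hasFourierDecay_le_polyIndexOver n (k i)) hH1 hpH
    (A := hfinite.toFinset) (fun a ha ↦ (hfinite.mem_toFinset.1 ha).1)
    fun a ha i ↦ Finset.mem_filter.2 ⟨Finset.mem_univ _, (hfinite.mem_toFinset.1 ha).2 i⟩
  have hdensity := prod_card_le_polyIndexOver_mul_prod_pow_le (p := p) n k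
  rw [Set.ncard_eq_toFinset_card _ hfinite,
    le_div_iff₀ (Finset.prod_pos fun i _ ↦ pow_pos (Nat.cast_pos.2 (hp i).pos) _)]
  rw [Fintype.card_fin] at hcount hdensity
  refine le_of_mul_le_mul_right ?_ (pow_pos (zero_lt_one.trans_le hprod) n)
  calc _ = hfinite.toFinset.card * (∏ i, (p i : ℝ)) ^ n * ∏ i, (p i : ℝ) ^ k i :=
        mul_right_comm _ _ _
    _ ≤ _ := mul_le_mul_of_nonneg_right hcount (by positivity)
    _ = 88 ^ n * H ^ n * (2 * n) ^ m * (_ * ∏ i, (p i : ℝ) ^ k i) := by ring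
    _ ≤ _ := mul_le_mul_of_nonneg_left hdensity (by positivity)
    _ = _ := by rw [mul_pow (2 * (n : ℝ))]; ring

/-- Corollary 4.8 of Bhargava's paper. Fix `n ≥ 1` and `0 < δ < 1/(2n-1)`. There are
constants `c = c(n) > 0` and `C = C(n,δ)` such that for every positive integer
`D = p_1^{k_1} ⋯ p_m^{k_m}` (the `p_i` distinct primes, each `k_i ≥ 2`) with
`Cprod = p_1 ⋯ p_m < H^{1+δ}` (`H ≥ 2`), the number of monic integer polynomials
`x^n + a_1 x^{n-1} + ... + a_n` with `|a_i| ≤ H` whose reduction modulo `p_i` has index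
at least `k_i` over `𝔽_{p_i}` for each `i` is at most `C·c^m·H^n/D`. -/
theorem index_ge_k_count_small_conductor (n : ℕ) (hn : 1 ≤ n) (δ : ℝ) (hδ0 : 0 < δ)
    (hδ1 : δ < 1 / (2 * (n : ℝ) - 1)) :
    ∃ c C : ℝ, 0 < c ∧ 0 < C ∧
      ∀ (m : ℕ) (p : Fin m → ℕ) (hp : ∀ i, (p i).Prime),
        Function.Injective p → ∀ k : Fin m → ℕ, (∀ i, 2 ≤ k i) →
        ∀ H : ℝ, 2 ≤ H → (∏ i, (p i : ℝ)) < H ^ ((1 : ℝ) + δ) →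
        (Set.ncard {a : Fin n → ℤ | (∀ i, |(a i : ℝ)| ≤ H) ∧
            ∀ i, k i ≤ indexModP (p i) (hp i) n a} : ℝ)
          ≤ C * c ^ m * H ^ n / (∏ i, (p i : ℝ) ^ k i) := by
  obtain ⟨c, C, hc, hC, hcount⟩ := index_ge_k_count_small_conductor_general n hn
  exact ⟨c, C, hc, hC, fun m p hp hinj k _ H hH hpH ↦ hcount m p hp hinj k H (by linarith)
    (pow_le_of_lt_rpow hn hδ1 (by linarith) (by positivity) hpH)⟩
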